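/- Let C be any one of the following families of permutations: Av({123}), Av({132}), Av({1423,4123}), Av({1234,2134}), Av({1324,3124}), Av({2314,3214}), Av({2413,4213}), Av({3412,4312}), the family of permutations avoiding 213 such that every descent position i admits some j < i with σ(i+1) < σ(j) < σ(i), or the family of permutations avoiding 213 such that every descent position i admits an odd number of indices j < i with σ(i+1) < σ(j) < σ(i). For each n ≥ 1, let σ_n be a uniform random permutation in the (nonempty) set C^n of permutations of size n in C. Then there exist constants Λ_π ∈ [0,1], one for each permutation π, such that for every permutation π, c-occ(π, σ_n)/n converges in probability, as n → ∞, to Λ_π. -/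

import Mathlib

open scoped Classical

/-- An occurrence of the pattern `π` in the permutation `σ`: a strictly increasing choice of
indices on which `σ` is in the same relative order as `π`. -/
def IsOcc {k n : ℕ} (π : Equiv.Perm (Fin k)) (σ : Equiv.Perm (Fin n)) : Prop :=
  ∃ f : Fin k → Fin n, StrictMono f ∧ ∀ a b : Fin k, σ (f a) < σ (f b) ↔ π a < π b

/-- A consecutive occurrence of the pattern `π` in the permutation `σ` at (0-based)
position `m`. -/
def IsConsecOccAt {k n : ℕ} (π : Equiv.Perm (Fin k)) (σ : Equiv.Perm (Fin n)) (m : ℕ) : Prop :=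
  ∃ hm : m + k ≤ n, ∀ a b : Fin k,
    (σ ⟨m + (a : ℕ), by have := a.isLt; omega⟩ < σ ⟨m + (b : ℕ), by have := b.isLt; omega⟩
      ↔ π a < π b)

/-- The number of consecutive occurrences of the pattern `π` in the permutation `σ`. -/
noncomputable def cOcc {k n : ℕ} (π : Equiv.Perm (Fin k)) (σ : Equiv.Perm (Fin n)) : ℕ :=
  ((Finset.range (n + 1)).filter fun m => IsConsecOccAt π σ m).card

/-- The set of permutations of size `n` avoiding every pattern in `B`. -/
noncomputable def avoidSet (n : ℕ) {k : ℕ} (B : Finset (Equiv.Perm (Fin k))) :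
    Finset (Equiv.Perm (Fin n)) :=
  Finset.univ.filter fun σ => ∀ π ∈ B, ¬ IsOcc π σ

/-- The pattern 123. -/
noncomputable def p123 : Equiv.Perm (Fin 3) := Equiv.ofBijective ![0, 1, 2] (by decide)
/-- The pattern 132. -/
noncomputable def p132 : Equiv.Perm (Fin 3) := Equiv.ofBijective ![0, 2, 1] (by decide)
/-- The pattern 213. -/
noncomputable def p213 : Equiv.Perm (Fin 3) := Equiv.ofBijective ![1, 0, 2] (by decide)
/-- The pattern 1423. -/
noncomputable def p1423 : Equiv.Perm (Fin 4) := Equiv.ofBijective ![0, 3, 1, 2] (by decide)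
/-- The pattern 4123. -/
noncomputable def p4123 : Equiv.Perm (Fin 4) := Equiv.ofBijective ![3, 0, 1, 2] (by decide)
/-- The pattern 1234. -/
noncomputable def p1234 : Equiv.Perm (Fin 4) := Equiv.ofBijective ![0, 1, 2, 3] (by decide)
/-- The pattern 2134. -/
noncomputable def p2134 : Equiv.Perm (Fin 4) := Equiv.ofBijective ![1, 0, 2, 3] (by decide)
/-- The pattern 1324. -/
noncomputable def p1324 : Equiv.Perm (Fin 4) := Equiv.ofBijective ![0, 2, 1, 3] (by decide)
/-- The pattern 3124. -/
noncomputable def p3124 : Equiv.Perm (Fin 4) := Equiv.ofBijective ![2, 0, 1, 3] (by decide)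
/-- The pattern 2314. -/
noncomputable def p2314 : Equiv.Perm (Fin 4) := Equiv.ofBijective ![1, 2, 0, 3] (by decide)
/-- The pattern 3214. -/
noncomputable def p3214 : Equiv.Perm (Fin 4) := Equiv.ofBijective ![2, 1, 0, 3] (by decide)
/-- The pattern 2413. -/
noncomputable def p2413 : Equiv.Perm (Fin 4) := Equiv.ofBijective ![1, 3, 0, 2] (by decide)
/-- The pattern 4213. -/
noncomputable def p4213 : Equiv.Perm (Fin 4) := Equiv.ofBijective ![3, 1, 0, 2] (by decide)
/-- The pattern 3412. -/
noncomputable def p3412 : Equiv.Perm (Fin 4) := Equiv.ofBijective ![2, 3, 0, 1] (by decide)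
/-- The pattern 4312. -/
noncomputable def p4312 : Equiv.Perm (Fin 4) := Equiv.ofBijective ![3, 2, 0, 1] (by decide)

/-- The family of permutations (of every size) avoiding all patterns in `B`. -/
def AvPred {k : ℕ} (B : Finset (Equiv.Perm (Fin k))) : ∀ n, Equiv.Perm (Fin n) → Prop :=
  fun _ σ => ∀ π ∈ B, ¬ IsOcc π σ

/-- Every descent of `σ` is part of an occurrence of 2-31. -/
def DescentCondA {n : ℕ} (σ : Equiv.Perm (Fin n)) : Prop :=
  ∀ (i : ℕ) (hi : i + 1 < n), σ ⟨i + 1, hi⟩ < σ ⟨i, by omega⟩ →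
    ∃ j : Fin n, (j : ℕ) < i ∧ σ ⟨i + 1, hi⟩ < σ j ∧ σ j < σ ⟨i, by omega⟩

/-- Every descent of `σ` is part of an odd number of occurrences of 2-31. -/
def DescentCondB {n : ℕ} (σ : Equiv.Perm (Fin n)) : Prop :=
  ∀ (i : ℕ) (hi : i + 1 < n), σ ⟨i + 1, hi⟩ < σ ⟨i, by omega⟩ →
    Odd ((Finset.univ.filter fun j : Fin n =>
      (j : ℕ) < i ∧ σ ⟨i + 1, hi⟩ < σ j ∧ σ j < σ ⟨i, by omega⟩).card)

/-- The family of {213, 2̄-31}-avoiding permutations. -/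
def FamAPred : ∀ n, Equiv.Perm (Fin n) → Prop :=
  fun _ σ => ¬ IsOcc p213 σ ∧ DescentCondA σ

/-- The family of {213, 2̄ᵒ-31}-avoiding permutations. -/
def FamBPred : ∀ n, Equiv.Perm (Fin n) → Prop :=
  fun _ σ => ¬ IsOcc p213 σ ∧ DescentCondB σ

/-!
Each of the ten families is grown by appending a last value, chosen among the active sites and
encoded by a letter. The letter `a` turns a permutation with `k` active sites into one with
`k + 1 - d a` active sites. Thus the permutations of size `n + 1` correspond to the valid words of
length `n`: those whose letters lead, from the label `2`, only to labels at least a fixed minimum.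

Give the letters the law `A * x ^ d a`, with `x` chosen so that the label has mean increment `0`.
Valid words of length `n` leading to the same label are then equally likely. Hence an event of
probability `p` contains at most `C * W ^ n * p` valid words, where `W = 1 / (A * x)`. On the other
hand, the concave quadratic vanishing at both ends of a long interval of labels is lowered by only a
constant in a step of the walk, which yields at least `c * (W * (1 - δ)) ^ n` valid words in total,
for every `δ > 0`. Events of exponentially small probability are therefore negligible for the
uniform measure on the family.

As long as the label is large, the relative order of the entries inserted last depends only on their
letters: recent entries stay close to the bottom site or close to the top one, and raising the
initial label by one shifts the heights of the latter by one. Independent letters make the number of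
windows with a given pattern concentrate, and a word spends a positive proportion of its time at
bounded labels with exponentially small probability only. The limit `Λ_π` is the probability that a
window of independent letters at a large label has the pattern `π`.
-/

open MeasureTheory Filter Equiv

section WindowCount

variable {α : Type*}

/-- The number of the blocks of length `b` that `l` is cut into, from its head on, that lie in `A`;
an incomplete block at the end is ignored. -/
noncomputable def blockCount (b : ℕ) (A : Set (List α)) (l : List α) : ℕ :=
  Nat.count (fun q => (l.drop (q * b)).take b ∈ A) (l.length / b)

/-- The number of windows of length `b` of `l`, overlapping ones included, that lie in `A`. -/
noncomputable def windowCount (b : ℕ) (A : Set (List α)) (l : List α) : ℕ :=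
  Nat.count (fun j => (l.drop j).take b ∈ A) (l.length + 1 - b)

theorem blockCount_append {b : ℕ} (hb : 0 < b) (A : Set (List α)) {w : List α} (hw : w.length = b)
    (l : List α) : blockCount b A (w ++ l) = blockCount b A l + if w ∈ A then 1 else 0 := by
  subst hw
  have hdrop : ∀ q, (w ++ l).drop ((q + 1) * w.length) = l.drop (q * w.length) := fun q => by
    rw [Nat.succ_mul, Nat.add_comm, ← List.drop_drop, List.drop_left]
  rw [blockCount, List.length_append, Nat.add_comm, Nat.add_div_right _ hb, Nat.count_succ']
  simp only [hdrop, Nat.zero_mul, List.drop_zero, List.take_left, blockCount]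

theorem windowCount_le_sum_blockCount {b : ℕ} (hb : 0 < b) (A : Set (List α)) (l : List α) :
    windowCount b A l ≤ ∑ r ∈ Finset.range b, blockCount b A (l.drop r) := by
  simp only [windowCount, blockCount, Nat.count_eq_card_filter_range, List.drop_drop,
    List.length_drop]
  rw [← Finset.card_sigma]
  refine Finset.card_le_card_of_injOn (fun j => ⟨j % b, j / b⟩) (fun j hj => ?_)
    (fun i _ j _ hij => ?_)
  · have hmod : j % b + j / b * b = j := Nat.mod_add_div' j b
    simp only [Finset.coe_filter, Finset.mem_range, Set.mem_ofPred_eq] at hj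
    simp only [Finset.coe_sigma, Set.mem_sigma_iff, Finset.coe_filter, Finset.mem_range,
      Set.mem_ofPred_eq, Finset.coe_range, Set.mem_Iio, hmod]
    refine ⟨Nat.mod_lt _ hb, ?_, hj.2⟩
    rw [← Nat.succ_le_iff, Nat.le_div_iff_mul_le hb, Nat.succ_mul]
    omega
  · simp only [Sigma.mk.injEq, heq_eq_eq] at hij
    rw [← Nat.mod_add_div i b, ← Nat.mod_add_div j b, hij.1, hij.2]

end WindowCount

section WordLaw

variable {α : Type*}

instance : MeasurableSpace (List α) := ⊤

instance : DiscreteMeasurableSpace (List α) := ⟨fun _ => trivial⟩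

variable [MeasurableSpace α]

/-- The law of a word of `n` independent letters of law `μ`. The head of the list is the letter
drawn last, so that the first letters drawn form a suffix. -/
noncomputable def wordLaw (μ : Measure α) : ℕ → Measure (List α)
  | 0 => Measure.dirac []
  | n + 1 => (wordLaw μ n).bind fun l => μ.map (· :: l)

theorem lintegral_wordLaw_zero (μ : Measure α) (f : List α → ENNReal) :
    ∫⁻ l, f l ∂wordLaw μ 0 = f [] :=
  lintegral_dirac _ _

variable [DiscreteMeasurableSpace α] (μ : Measure α)

theorem lintegral_wordLaw_succ (n : ℕ) (f : List α → ENNReal) :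
    ∫⁻ l, f l ∂wordLaw μ (n + 1) = ∫⁻ l, ∫⁻ a, f (a :: l) ∂μ ∂wordLaw μ n := by
  rw [wordLaw, Measure.lintegral_bind Measurable.of_discrete.aemeasurable
    Measurable.of_discrete.aemeasurable]
  simp only [lintegral_map Measurable.of_discrete Measurable.of_discrete]

theorem wordLaw_singleton (l : List α) :
    wordLaw μ l.length {l} = (l.map fun a => μ {a}).prod := by
  induction l with
  | nil => simp [wordLaw]
  | cons a l ih =>
    have hind : ∀ (v : List α) (b : α), ({a :: l} : Set (List α)).indicator 1 (b :: v) =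
        ({l} : Set (List α)).indicator 1 v * ({a} : Set α).indicator (1 : α → ENNReal) b := by
      intro v b
      by_cases hv : v = l <;> by_cases hb : b = a <;> simp [hv, hb]
    rw [← lintegral_indicator_one (.of_discrete), List.length_cons, lintegral_wordLaw_succ]
    simp only [hind, lintegral_const_mul _ Measurable.of_discrete,
      lintegral_mul_const _ Measurable.of_discrete, lintegral_indicator_one (.of_discrete)]
    rw [ih, List.map_cons, List.prod_cons, mul_comm]

theorem lintegral_wordLaw_add (m n : ℕ) (f : List α → ENNReal) :
    ∫⁻ l, f l ∂wordLaw μ (m + n) = ∫⁻ l, ∫⁻ v, f (v ++ l) ∂wordLaw μ n ∂wordLaw μ m := by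
  induction n generalizing f with
  | zero => simp only [Nat.add_zero, lintegral_wordLaw_zero, List.nil_append]
  | succ n ih =>
    rw [← Nat.add_assoc, lintegral_wordLaw_succ, ih]
    simp only [lintegral_wordLaw_succ, List.cons_append]

theorem ae_length_wordLaw (n : ℕ) : ∀ᵐ l ∂wordLaw μ n, l.length = n := by
  have hlint : ∫⁻ l, (if l.length = n then 0 else 1) ∂wordLaw μ n = 0 := by
    induction n with
    | zero => simp [lintegral_wordLaw_zero]
    | succ n ih =>
      simp only [lintegral_wordLaw_succ, List.length_cons, Nat.add_right_cancel_iff,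
        lintegral_const, lintegral_mul_const _ Measurable.of_discrete, ih, zero_mul]
  rw [lintegral_eq_zero_iff Measurable.of_discrete] at hlint
  filter_upwards [hlint] with l hl
  by_contra hne
  simp [hne] at hl

variable [IsProbabilityMeasure μ]

instance isProbabilityMeasure_wordLaw (n : ℕ) : IsProbabilityMeasure (wordLaw μ n) := by
  refine ⟨?_⟩
  induction n with
  | zero => simp [wordLaw]
  | succ n ih => rw [← lintegral_one, lintegral_wordLaw_succ]; simpa using ih

theorem lintegral_wordLaw_drop (m r : ℕ) (f : List α → ENNReal) :
    ∫⁻ l, f (l.drop r) ∂wordLaw μ (m + r) = ∫⁻ l, f l ∂wordLaw μ m := by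
  rw [lintegral_wordLaw_add]
  refine lintegral_congr fun l => ?_
  have hdrop : ∀ᵐ v ∂wordLaw μ r, f ((v ++ l).drop r) = f l := by
    filter_upwards [ae_length_wordLaw μ r] with v hv
    rw [← hv, List.drop_left]
  rw [lintegral_congr_ae hdrop, lintegral_const, measure_univ, mul_one]

theorem lintegral_pow_blockCount {b : ℕ} (hb : 0 < b) (A : Set (List α)) (z : ENNReal) (n : ℕ) :
    ∫⁻ l, z ^ blockCount b A l ∂wordLaw μ n =
      (∫⁻ w, z ^ (if w ∈ A then 1 else 0) ∂wordLaw μ b) ^ (n / b) := by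
  induction n using Nat.strong_induction_on with
  | _ n ih =>
    rcases Nat.lt_or_ge n b with hn | hn
    · have hcount : ∀ᵐ l ∂wordLaw μ n, z ^ blockCount b A l = 1 := by
        filter_upwards [ae_length_wordLaw μ n] with l hl
        rw [blockCount, hl, Nat.div_eq_of_lt hn, Nat.count_zero, pow_zero]
      rw [lintegral_congr_ae hcount, Nat.div_eq_of_lt hn, pow_zero, lintegral_one, measure_univ]
    · obtain ⟨m, rfl⟩ := Nat.exists_eq_add_of_le' hn
      have hblock : ∀ l, ∫⁻ w, z ^ blockCount b A (w ++ l) ∂wordLaw μ b =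
          z ^ blockCount b A l * ∫⁻ w, z ^ (if w ∈ A then 1 else 0) ∂wordLaw μ b := fun l => by
        rw [← lintegral_const_mul _ Measurable.of_discrete]
        refine lintegral_congr_ae ?_
        filter_upwards [ae_length_wordLaw μ b] with w hw
        rw [blockCount_append hb A hw, pow_add]
      rw [lintegral_wordLaw_add, lintegral_congr hblock,
        lintegral_mul_const _ Measurable.of_discrete, ih m (by omega), Nat.add_div_right _ hb,
        pow_succ]

theorem lintegral_exp_pow_ite_mem_le {Ω : Type*} [MeasurableSpace Ω] (P : Measure Ω)
    [IsProbabilityMeasure P] {A : Set Ω} (hA : MeasurableSet A) {t : ℝ} (ht : 0 ≤ t) :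
    ∫⁻ w, ENNReal.ofReal (Real.exp t) ^ (if w ∈ A then 1 else 0) ∂P ≤
      ENNReal.ofReal (Real.exp ((Real.exp t - 1) * P.real A)) := by
  have hexp : 0 ≤ Real.exp t - 1 := sub_nonneg.2 (Real.one_le_exp ht)
  have hpow : ∀ w, ENNReal.ofReal (Real.exp t) ^ (if w ∈ A then 1 else 0) =
      1 + A.indicator (fun _ => ENNReal.ofReal (Real.exp t - 1)) w := fun w => by
    by_cases hw : w ∈ A
    · rw [if_pos hw, pow_one, Set.indicator_of_mem hw, ← ENNReal.ofReal_one,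
        ← ENNReal.ofReal_add zero_le_one hexp, add_sub_cancel]
    · rw [if_neg hw, pow_zero, Set.indicator_of_notMem hw, add_zero]
  rw [lintegral_congr hpow, lintegral_add_left measurable_const, lintegral_indicator_const hA,
    lintegral_one, measure_univ, ← ofReal_measureReal, ← ENNReal.ofReal_mul hexp,
    ← ENNReal.ofReal_one, ← ENNReal.ofReal_add zero_le_one (by positivity)]
  exact ENNReal.ofReal_le_ofReal ((add_comm _ _).trans_le (Real.add_one_le_exp _))

theorem exists_exp_sub_one_mul_lt {Λ ε : ℝ} (hΛ₀ : 0 ≤ Λ) (hΛ₁ : Λ ≤ 1) (hε : 0 < ε) :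
    ∃ t : ℝ, 0 < t ∧ (Real.exp t - 1) * Λ < t * (Λ + ε) := by
  have ht : 0 < min 1 (ε / 2) := lt_min one_pos (by positivity)
  refine ⟨min 1 (ε / 2), ht, ?_⟩
  set t := min 1 (ε / 2)
  have hexp : Real.exp t ≤ 1 + t + t ^ 2 := by
    have habs := Real.abs_exp_sub_one_sub_id_le (x := t)
      (by rw [abs_of_pos ht]; exact min_le_left _ _)
    linarith [(abs_le.1 habs).2]
  calc (Real.exp t - 1) * Λ ≤ (t + t ^ 2) * Λ := by gcongr; linarith
    _ ≤ t * Λ + t * (ε / 2) := by nlinarith [min_le_right 1 (ε / 2), mul_nonneg ht.le hΛ₀]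
    _ < t * (Λ + ε) := by nlinarith

theorem lintegral_exp_pow_blockCount_drop_le {b : ℕ} (hb : 0 < b) (A : Set (List α)) {t : ℝ}
    (ht : 0 ≤ t) (n r : ℕ) :
    ∫⁻ l, ENNReal.ofReal (Real.exp t) ^ blockCount b A (l.drop r) ∂wordLaw μ n ≤
      ENNReal.ofReal (Real.exp (n / b * ((Real.exp t - 1) * (wordLaw μ b).real A))) := by
  set z := ENNReal.ofReal (Real.exp t)
  set M := (Real.exp t - 1) * (wordLaw μ b).real A
  have hM : 0 ≤ M := mul_nonneg (sub_nonneg.2 (Real.one_le_exp ht)) measureReal_nonneg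
  rcases le_total r n with hr | hr
  · obtain ⟨m, rfl⟩ := Nat.exists_eq_add_of_le' hr
    have hdiv : ((m / b : ℕ) : ℝ) ≤ ((m + r : ℕ) : ℝ) / b :=
      Nat.cast_div_le.trans (by gcongr; exact Nat.le_add_right m r)
    rw [lintegral_wordLaw_drop μ m r fun l => z ^ blockCount b A l, lintegral_pow_blockCount μ hb]
    calc _ ≤ ENNReal.ofReal (Real.exp M) ^ (m / b) := by
          gcongr
          exact lintegral_exp_pow_ite_mem_le _ .of_discrete ht
      _ = ENNReal.ofReal (Real.exp ((m / b : ℕ) * M)) := by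
          rw [← ENNReal.ofReal_pow (Real.exp_nonneg _), ← Real.exp_nat_mul]
      _ ≤ _ := by gcongr
  · have hcount : ∀ᵐ l ∂wordLaw μ n, z ^ blockCount b A (l.drop r) = 1 := by
      filter_upwards [ae_length_wordLaw μ n] with l hl
      rw [List.drop_eq_nil_of_le (hl.trans_le hr), blockCount, List.length_nil, Nat.zero_div,
        Nat.count_zero, pow_zero]
    rw [lintegral_congr_ae hcount, lintegral_one, measure_univ, ← ENNReal.ofReal_one]
    exact ENNReal.ofReal_le_ofReal (Real.one_le_exp (by positivity))

theorem wordLaw_setOf_le_blockCount_drop_le {b : ℕ} (hb : 0 < b) (A : Set (List α)) {t : ℝ}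
    (ht : 0 ≤ t) (n r : ℕ) (y : ℝ) :
    wordLaw μ n {l | y ≤ blockCount b A (l.drop r)} ≤
      ENNReal.ofReal (Real.exp (n / b * ((Real.exp t - 1) * (wordLaw μ b).real A) - t * y)) := by
  have hsub : {l : List α | y ≤ blockCount b A (l.drop r)} ⊆
      {l | ENNReal.ofReal (Real.exp (t * y)) ≤
        ENNReal.ofReal (Real.exp t) ^ blockCount b A (l.drop r)} := fun l hl => by
    rw [Set.mem_ofPred_eq, ← ENNReal.ofReal_pow (Real.exp_nonneg _), ← Real.exp_nat_mul, mul_comm]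
    gcongr
    exact hl
  refine (measure_mono hsub).trans ((meas_ge_le_lintegral_div
    Measurable.of_discrete.aemeasurable (by simp [Real.exp_pos]) ENNReal.ofReal_ne_top).trans ?_)
  rw [Real.exp_sub, ENNReal.ofReal_div_of_pos (Real.exp_pos _)]
  gcongr
  exact lintegral_exp_pow_blockCount_drop_le μ hb A ht n r

/-- The pigeonhole over the offset `r` reduces overlapping windows to disjoint, hence independent,
blocks. -/
theorem exists_wordLaw_setOf_le_windowCount_le {b : ℕ} (hb : 0 < b) (A : Set (List α)) {ε : ℝ}
    (hε : 0 < ε) :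
    ∃ q : ℝ, 0 < q ∧ q < 1 ∧ ∀ n : ℕ,
      wordLaw μ n {l | n * ((wordLaw μ b).real A + ε) ≤ windowCount b A l} ≤
        ENNReal.ofReal (b * q ^ n) := by
  set Λ := (wordLaw μ b).real A
  obtain ⟨t, ht, hlt⟩ :=
    exists_exp_sub_one_mul_lt measureReal_nonneg (measureReal_le_one (μ := wordLaw μ b)) hε
  have hb' : (0 : ℝ) < b := Nat.cast_pos.2 hb
  refine ⟨Real.exp (((Real.exp t - 1) * Λ - t * (Λ + ε)) / b), Real.exp_pos _,
    Real.exp_lt_one_iff.2 (div_neg_of_neg_of_pos (sub_neg.2 hlt) hb'), fun n => ?_⟩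
  have hsub : {l : List α | n * (Λ + ε) ≤ windowCount b A l} ⊆
      ⋃ r ∈ Finset.range b, {l | n * (Λ + ε) / b ≤ blockCount b A (l.drop r)} := fun l hl => by
    by_contra hcon
    simp only [Set.mem_iUnion, Set.mem_ofPred_eq, not_exists, not_le] at hcon
    have hsum := Finset.sum_lt_sum_of_nonempty (Finset.nonempty_range_iff.2 hb.ne') hcon
    rw [Finset.sum_const, Finset.card_range, nsmul_eq_mul, mul_div_cancel₀ _ hb'.ne'] at hsum
    have hle : (windowCount b A l : ℝ) ≤ ∑ r ∈ Finset.range b, (blockCount b A (l.drop r) : ℝ) :=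
      mod_cast windowCount_le_sum_blockCount hb A l
    exact absurd (hle.trans_lt hsum) (not_lt.2 hl)
  calc _ ≤ ∑ r ∈ Finset.range b, wordLaw μ n {l | n * (Λ + ε) / b ≤ blockCount b A (l.drop r)} :=
        (measure_mono hsub).trans (measure_biUnion_finset_le _ _)
    _ ≤ ∑ _r ∈ Finset.range b, ENNReal.ofReal
          (Real.exp (n / b * ((Real.exp t - 1) * Λ) - t * (n * (Λ + ε) / b))) :=
        Finset.sum_le_sum fun r _ => wordLaw_setOf_le_blockCount_drop_le μ hb A ht.le n r _
    _ = _ := by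
        rw [Finset.sum_const, Finset.card_range, nsmul_eq_mul, ← ENNReal.ofReal_natCast b,
          ← ENNReal.ofReal_mul (Nat.cast_nonneg b), ← Real.exp_nat_mul]
        ring_nf

end WordLaw

/-- A one-dimensional generating tree: the letters allowed at the label `k` are those `a` with
`minLabel ≤ k + 1 - loss a`, and `a` leads to the label `k + 1 - loss a`. The weights
`scale * ratio ^ loss a` are a probability law under which the label has mean increment `0`. -/
structure LabelWalk where
  loss : ℕ → ℕ
  minLabel : ℕ
  ratio : ℝ
  scale : ℝ
  loss_zero : loss 0 = 0
  ratio_pos : 0 < ratio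
  ratio_lt_one : ratio < 1
  scale_pos : 0 < scale
  hasSum_weight : HasSum (fun a => scale * ratio ^ loss a) 1
  hasSum_weight_mul_loss : HasSum (fun a => scale * ratio ^ loss a * (loss a : ℝ)) 1
  summable_weight_mul_loss_sq : Summable fun a => scale * ratio ^ loss a * (loss a : ℝ) ^ 2

namespace LabelWalk

variable (w : LabelWalk)

/-- The letter `a` may follow a word of label `k`. Stated without subtraction. -/
def Allowed (k a : ℕ) : Prop := w.minLabel + w.loss a ≤ k + 1

/-- The label reached from the label `k` by the letter `a`. -/
def next (k a : ℕ) : ℕ := k + 1 - w.loss a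

/-- The label reached from the label `k₀` by a word, read from its last letter to its head. -/
def label (k₀ : ℕ) : List ℕ → ℕ
  | [] => k₀
  | a :: l => w.next (label k₀ l) a

/-- Every letter of the word is allowed at the label at which it is read. -/
def Valid (k₀ : ℕ) : List ℕ → Prop
  | [] => True
  | a :: l => Valid k₀ l ∧ w.Allowed (w.label k₀ l) a

/-- The number of letters of the word that are read at a label at most `c`. -/
noncomputable def lowCount (c k₀ : ℕ) (l : List ℕ) : ℕ :=
  Nat.count (fun i => w.label k₀ (l.drop (i + 1)) ≤ c) l.length

theorem lowCount_cons (c k₀ a : ℕ) (l : List ℕ) :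
    w.lowCount c k₀ (a :: l) = w.lowCount c k₀ l + if w.label k₀ l ≤ c then 1 else 0 := by
  simp only [lowCount, List.length_cons, Nat.count_succ', List.drop_succ_cons, List.drop_zero]

theorem weight_pos (a : ℕ) : 0 < w.scale * w.ratio ^ w.loss a :=
  mul_pos w.scale_pos (pow_pos w.ratio_pos _)

theorem finite_setOf_loss_le (M : ℕ) : {a | w.loss a ≤ M}.Finite := by
  have hsmall : ∀ᶠ a in cofinite, w.scale * w.ratio ^ w.loss a < w.scale * w.ratio ^ M :=
    w.hasSum_weight.summable.tendsto_cofinite_zero.eventually_lt_const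
      (mul_pos w.scale_pos (pow_pos w.ratio_pos _))
  refine (eventually_cofinite.1 hsmall).subset fun a ha => not_lt.2 ?_
  exact mul_le_mul_of_nonneg_left
    (pow_le_pow_of_le_one w.ratio_pos.le w.ratio_lt_one.le ha) w.scale_pos.le

theorem finite_setOf_allowed (k : ℕ) : {a | w.Allowed k a}.Finite :=
  (w.finite_setOf_loss_le (k + 1)).subset fun _ ha => (Nat.le_add_left _ _).trans ha

/-- The probability law of a letter, which gives the same weight to all valid words of the same
length that lead to the same label. -/
noncomputable def letterPMF : PMF ℕ :=
  ⟨fun a => ENNReal.ofReal (w.scale * w.ratio ^ w.loss a), by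
    rw [ENNReal.summable.hasSum_iff, ← ENNReal.ofReal_tsum_of_nonneg (fun a => (w.weight_pos a).le)
      w.hasSum_weight.summable, w.hasSum_weight.tsum_eq, ENNReal.ofReal_one]⟩

/-- The law of a letter, as a measure. -/
noncomputable abbrev letterLaw : Measure ℕ := w.letterPMF.toMeasure

theorem letterLaw_singleton (a : ℕ) :
    w.letterLaw {a} = ENNReal.ofReal (w.scale * w.ratio ^ w.loss a) :=
  PMF.toMeasure_apply_singleton _ _ .of_discrete

section LowLabels

theorem exists_letterLaw_allowed_le (c : ℕ) : ∃ ρ : ℝ, 0 < ρ ∧ ρ < 1 ∧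
    ∀ k ≤ c, w.letterLaw {a | w.Allowed k a} ≤ ENNReal.ofReal ρ := by
  obtain ⟨a, ha⟩ := (w.finite_setOf_loss_le (c + 1)).exists_notMem
  refine ⟨max (1 - w.scale * w.ratio ^ w.loss a) (1 / 2), lt_max_of_lt_right one_half_pos,
    max_lt (sub_lt_self _ (w.weight_pos a)) one_half_lt_one, fun k hk => ?_⟩
  have hsub : {a | w.Allowed k a} ⊆ {a}ᶜ := by
    rintro _ hallowed rfl
    exact ha (((Nat.le_add_left _ _).trans hallowed).trans (by omega))
  calc w.letterLaw {a | w.Allowed k a} ≤ w.letterLaw {a}ᶜ := measure_mono hsub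
    _ = ENNReal.ofReal (1 - w.scale * w.ratio ^ w.loss a) := by
      rw [prob_compl_eq_one_sub .of_discrete, letterLaw_singleton,
        ENNReal.ofReal_sub _ (w.weight_pos a).le, ENNReal.ofReal_one]
    _ ≤ _ := ENNReal.ofReal_le_ofReal (le_max_left _ _)

/-- The integrand is a supermartingale: a low label costs at least the factor gained. -/
theorem lintegral_indicator_valid_pow_lowCount_le {c : ℕ} {z : ENNReal}
    (hz : ∀ k ≤ c, z * w.letterLaw {a | w.Allowed k a} ≤ 1) (k₀ n : ℕ) :
    ∫⁻ l, {l | w.Valid k₀ l}.indicator (fun l => z ^ w.lowCount c k₀ l) l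
      ∂wordLaw w.letterLaw n ≤ 1 := by
  induction n with
  | zero =>
    rw [lintegral_wordLaw_zero, Set.indicator_of_mem (show [] ∈ {l | w.Valid k₀ l} from trivial),
      lowCount, List.length_nil, Nat.count_zero, pow_zero]
  | succ n ih =>
    rw [lintegral_wordLaw_succ]
    refine (lintegral_mono fun l => ?_).trans ih
    by_cases hl : w.Valid k₀ l
    · have hletter : ∀ a, {l | w.Valid k₀ l}.indicator (fun l => z ^ w.lowCount c k₀ l) (a :: l) =
          {a | w.Allowed (w.label k₀ l) a}.indicator
            (fun _ => z ^ w.lowCount c k₀ l * z ^ (if w.label k₀ l ≤ c then 1 else 0)) a := by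
        intro a
        simp only [Set.indicator_apply, Set.mem_ofPred_eq, Valid, hl, true_and, lowCount_cons,
          pow_add]
      simp only [hletter]
      rw [lintegral_indicator_const .of_discrete, mul_assoc,
        Set.indicator_of_mem (show l ∈ {l | w.Valid k₀ l} from hl)]
      refine mul_le_of_le_one_right' ?_
      split_ifs with hc
      · simpa only [pow_one] using hz _ hc
      · simpa only [pow_zero, one_mul] using prob_le_one
    · simp [Valid, hl]

theorem exists_wordLaw_valid_le_lowCount_le (c k₀ : ℕ) : ∃ ρ : ℝ, 0 < ρ ∧ ρ < 1 ∧ ∀ R n : ℕ,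
    wordLaw w.letterLaw n {l | w.Valid k₀ l ∧ R ≤ w.lowCount c k₀ l} ≤ ENNReal.ofReal (ρ ^ R) := by
  obtain ⟨ρ, hρ₀, hρ₁, hρ⟩ := w.exists_letterLaw_allowed_le c
  refine ⟨ρ, hρ₀, hρ₁, fun R n => ?_⟩
  set z := (ENNReal.ofReal ρ)⁻¹
  have hρne : ENNReal.ofReal ρ ≠ 0 := (ENNReal.ofReal_pos.2 hρ₀).ne'
  have hz : 1 ≤ z := ENNReal.one_le_inv.2 (ENNReal.ofReal_le_one.2 hρ₁.le)
  have hzρ : ∀ k ≤ c, z * w.letterLaw {a | w.Allowed k a} ≤ 1 := fun k hk =>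
    (mul_le_mul_right (hρ k hk) z).trans_eq (ENNReal.inv_mul_cancel hρne ENNReal.ofReal_ne_top)
  have hsub : {l | w.Valid k₀ l ∧ R ≤ w.lowCount c k₀ l} ⊆
      {l | z ^ R ≤ {l | w.Valid k₀ l}.indicator (fun l => z ^ w.lowCount c k₀ l) l} := by
    intro l ⟨hl, hR⟩
    rw [Set.mem_ofPred_eq, Set.indicator_of_mem (show l ∈ {l | w.Valid k₀ l} from hl)]
    exact pow_le_pow_right₀ hz hR
  calc _ ≤ _ := measure_mono hsub
    _ ≤ 1 / z ^ R := (meas_ge_le_lintegral_div Measurable.of_discrete.aemeasurable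
        (by simp [z]) (by simp [z, hρ₀])).trans
        (ENNReal.div_le_div_right (w.lintegral_indicator_valid_pow_lowCount_le hzρ k₀ n) _)
    _ = ENNReal.ofReal (ρ ^ R) := by
      rw [one_div, ENNReal.inv_pow, inv_inv, ENNReal.ofReal_pow hρ₀.le]

end LowLabels

section UpperBound

theorem sum_loss_add_label {k₀ : ℕ} {l : List ℕ} (hl : w.Valid k₀ l) :
    (l.map w.loss).sum + w.label k₀ l = k₀ + l.length := by
  induction l with
  | nil => simp [label]
  | cons a l ih =>
    have hsum := ih hl.1
    have ha : w.loss a ≤ w.label k₀ l + 1 := (Nat.le_add_left _ _).trans hl.2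
    simp only [List.map_cons, List.sum_cons, label, next, List.length_cons]
    omega

theorem wordLaw_letterLaw_singleton (l : List ℕ) : wordLaw w.letterLaw l.length {l} =
    ENNReal.ofReal (w.scale ^ l.length * w.ratio ^ (l.map w.loss).sum) := by
  rw [wordLaw_singleton]
  induction l with
  | nil => simp
  | cons a l ih =>
    rw [List.map_cons, List.prod_cons, ih, letterLaw_singleton,
      ← ENNReal.ofReal_mul (w.weight_pos a).le, List.map_cons, List.sum_cons, List.length_cons]
    ring_nf

/-- The exponential growth rate of the number of valid words. -/
noncomputable def growthRate : ℝ := 1 / (w.scale * w.ratio)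

theorem growthRate_pos : 0 < w.growthRate := one_div_pos.2 (mul_pos w.scale_pos w.ratio_pos)

theorem card_le_of_wordLaw_le {k₀ n : ℕ} {T : Finset (List ℕ)}
    (hT : ∀ l ∈ T, l.length = n ∧ w.Valid k₀ l) {P : ℝ} (hP₀ : 0 ≤ P)
    (hP : wordLaw w.letterLaw n T ≤ ENNReal.ofReal P) :
    (T.card : ℝ) ≤ (1 / w.ratio) ^ k₀ * w.growthRate ^ n * P := by
  have hscale := w.scale_pos
  have hratio := w.ratio_pos
  have hword : ∀ l ∈ T, ENNReal.ofReal (w.scale ^ n * w.ratio ^ (k₀ + n)) ≤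
      wordLaw w.letterLaw n {l} := by
    intro l hl
    obtain ⟨rfl, hvalid⟩ := hT l hl
    have hsum := w.sum_loss_add_label hvalid
    rw [wordLaw_letterLaw_singleton]
    gcongr ENNReal.ofReal (_ * ?_)
    exact pow_le_pow_of_le_one hratio.le w.ratio_lt_one.le (by omega)
  have hsum : ENNReal.ofReal (T.card * (w.scale ^ n * w.ratio ^ (k₀ + n))) ≤ ENNReal.ofReal P := by
    rw [ENNReal.ofReal_mul (Nat.cast_nonneg _), ENNReal.ofReal_natCast, ← nsmul_eq_mul]
    exact (Finset.card_nsmul_le_sum _ _ _ hword).trans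
      ((sum_measure_singleton).trans_le hP)
  have hle := (ENNReal.ofReal_le_ofReal_iff hP₀).1 hsum
  rw [← le_div_iff₀ (by positivity)] at hle
  refine hle.trans_eq ?_
  rw [growthRate, pow_add, one_div_pow, one_div_pow, mul_pow]
  field_simp

/-- The word `l` violates, by a margin `ε` per letter, the law of large numbers for the number of
windows of length `b` in `S` or in its complement, or spends a proportion `ε` of its time at labels
at most `c`. -/
def IsAtypical (b c k₀ : ℕ) (S : Set (List ℕ)) (ε : ℝ) (l : List ℕ) : Prop :=
  l.length * ((wordLaw w.letterLaw b).real S + ε) ≤ windowCount b S l ∨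
    l.length * ((wordLaw w.letterLaw b).real Sᶜ + ε) ≤ windowCount b Sᶜ l ∨
    l.length * ε ≤ w.lowCount c k₀ l

theorem exists_wordLaw_valid_isAtypical_le {b : ℕ} (hb : 0 < b) (c k₀ : ℕ) (S : Set (List ℕ))
    {ε : ℝ} (hε : 0 < ε) : ∃ q : ℝ, 0 < q ∧ q < 1 ∧ ∀ n : ℕ,
      wordLaw w.letterLaw n {l | l.length = n ∧ w.Valid k₀ l ∧ w.IsAtypical b c k₀ S ε l} ≤
        ENNReal.ofReal ((2 * b + 1) * q ^ n) := by
  obtain ⟨q₁, hq₁, hq₁', hS⟩ := exists_wordLaw_setOf_le_windowCount_le w.letterLaw hb S hε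
  obtain ⟨q₂, hq₂, hq₂', hSc⟩ := exists_wordLaw_setOf_le_windowCount_le w.letterLaw hb Sᶜ hε
  obtain ⟨ρ, hρ, hρ', hlow⟩ := w.exists_wordLaw_valid_le_lowCount_le c k₀
  set q := max q₁ (max q₂ (ρ ^ ε))
  have hq : 0 < q := lt_max_of_lt_left hq₁
  have hρε : ρ ^ ε ≤ q := (le_max_right _ _).trans (le_max_right _ _)
  refine ⟨q, hq, max_lt hq₁' (max_lt hq₂' (Real.rpow_lt_one hρ.le hρ' hε)), fun n => ?_⟩
  have hceil : ρ ^ ⌈n * ε⌉₊ ≤ q ^ n := by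
    refine le_trans ?_ (pow_le_pow_left₀ (Real.rpow_nonneg hρ.le ε) hρε n)
    rw [← Real.rpow_natCast, ← Real.rpow_mul_natCast hρ.le]
    exact Real.rpow_le_rpow_of_exponent_ge hρ hρ'.le (by rw [mul_comm]; exact Nat.le_ceil _)
  have hcover : {l | l.length = n ∧ w.Valid k₀ l ∧ w.IsAtypical b c k₀ S ε l} ⊆
      {l | n * ((wordLaw w.letterLaw b).real S + ε) ≤ windowCount b S l} ∪
      ({l | n * ((wordLaw w.letterLaw b).real Sᶜ + ε) ≤ windowCount b Sᶜ l} ∪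
        {l | w.Valid k₀ l ∧ ⌈n * ε⌉₊ ≤ w.lowCount c k₀ l}) := by
    rintro l ⟨rfl, hvalid, h | h | h⟩
    exacts [Or.inl h, Or.inr (Or.inl h), Or.inr (Or.inr ⟨hvalid, Nat.ceil_le.2 h⟩)]
  calc _ ≤ ENNReal.ofReal (b * q ^ n) +
        (ENNReal.ofReal (b * q ^ n) + ENNReal.ofReal (q ^ n)) := by
        refine (measure_mono hcover).trans ((measure_union_le _ _).trans (add_le_add
          ((hS n).trans ?_) ((measure_union_le _ _).trans (add_le_add
          ((hSc n).trans ?_) ((hlow _ n).trans (ENNReal.ofReal_le_ofReal hceil))))))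
        · gcongr
          exact le_max_left _ _
        · gcongr
          exact (le_max_left _ _).trans (le_max_right _ _)
    _ = _ := by
        rw [← ENNReal.ofReal_add (by positivity) (by positivity),
          ← ENNReal.ofReal_add (by positivity) (by positivity)]
        ring_nf

theorem exists_card_isAtypical_le {b : ℕ} (hb : 0 < b) (c k₀ : ℕ) (S : Set (List ℕ)) {ε : ℝ}
    (hε : 0 < ε) : ∃ q C : ℝ, 0 < q ∧ q < 1 ∧ ∀ (n : ℕ) (T : Finset (List ℕ)),
      (∀ l ∈ T, l.length = n ∧ w.Valid k₀ l ∧ w.IsAtypical b c k₀ S ε l) →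
        (T.card : ℝ) ≤ C * (w.growthRate * q) ^ n := by
  obtain ⟨q, hq, hq', hle⟩ := w.exists_wordLaw_valid_isAtypical_le hb c k₀ S hε
  refine ⟨q, (1 / w.ratio) ^ k₀ * (2 * b + 1), hq, hq', fun n T hT => ?_⟩
  refine (w.card_le_of_wordLaw_le (fun l hl => ⟨(hT l hl).1, (hT l hl).2.1⟩) (by positivity)
    ((measure_mono hT).trans (hle n))).trans_eq ?_
  rw [mul_pow]
  ring

end UpperBound

section LowerBound

/-- The letters allowed at the label `k`. -/
noncomputable def allowedLetters (k : ℕ) : Finset ℕ := (w.finite_setOf_allowed k).toFinset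

theorem mem_allowedLetters {k a : ℕ} : a ∈ w.allowedLetters k ↔ w.Allowed k a :=
  Set.Finite.mem_toFinset _

/-- The valid words of length `n`. -/
noncomputable def validWords (k₀ : ℕ) : ℕ → Finset (List ℕ)
  | 0 => {[]}
  | n + 1 => ((validWords k₀ n).sigma fun l => w.allowedLetters (w.label k₀ l)).image
      fun q => q.2 :: q.1

theorem mem_validWords {k₀ n : ℕ} {l : List ℕ} :
    l ∈ w.validWords k₀ n ↔ l.length = n ∧ w.Valid k₀ l := by
  induction n generalizing l with
  | zero =>
    rw [validWords, Finset.mem_singleton, List.length_eq_zero_iff]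
    exact ⟨fun h => ⟨h, h ▸ trivial⟩, And.left⟩
  | succ n ih =>
    cases l with
    | nil => simp [validWords]
    | cons a l => simp [validWords, Valid, ih, mem_allowedLetters, and_assoc]

theorem sum_validWords_succ (k₀ n : ℕ) (f : List ℕ → ℝ) :
    ∑ l ∈ w.validWords k₀ (n + 1), f l =
      ∑ l ∈ w.validWords k₀ n, ∑ a ∈ w.allowedLetters (w.label k₀ l), f (a :: l) := by
  rw [validWords, Finset.sum_image, Finset.sum_sigma]
  rintro ⟨l, a⟩ _ ⟨l', a'⟩ _ h
  obtain ⟨rfl, rfl⟩ := List.cons.inj h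
  rfl

/-- The second moment of the increment of the label. -/
noncomputable def incrementVariance : ℝ :=
  ∑' a, w.scale * w.ratio ^ w.loss a * (1 - (w.loss a : ℝ)) ^ 2

theorem hasSum_incrementVariance :
    HasSum (fun a => w.scale * w.ratio ^ w.loss a * (1 - (w.loss a : ℝ)) ^ 2)
      w.incrementVariance := by
  refine Summable.hasSum (((w.hasSum_weight.sub (w.hasSum_weight_mul_loss.mul_left 2)).add
    w.summable_weight_mul_loss_sq.hasSum).summable.congr fun a => ?_)
  ring

/-- The quadratic that vanishes just outside of the labels `minLabel, …, M - 1`. -/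
noncomputable def profile (M : ℕ) (y : ℝ) : ℝ := (y - w.minLabel + 1) * (M - y)

/-- The mean increment vanishes and `profile` has second derivative `-2`. -/
theorem hasSum_weight_mul_profile (M : ℕ) (y : ℝ) :
    HasSum (fun a => w.scale * w.ratio ^ w.loss a * w.profile M (y + 1 - w.loss a))
      (w.profile M y - w.incrementVariance) := by
  have hmean : HasSum (fun a => w.scale * w.ratio ^ w.loss a * (1 - (w.loss a : ℝ))) (1 - 1) :=
    (w.hasSum_weight.sub w.hasSum_weight_mul_loss).congr_fun fun a => by ring
  have htaylor := ((w.hasSum_weight.mul_left (w.profile M y)).add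
    (hmean.mul_left ((M - y) - (y - w.minLabel + 1)))).sub w.hasSum_incrementVariance
  rw [sub_self, mul_zero, add_zero, mul_one] at htaylor
  refine htaylor.congr_fun fun a => ?_
  simp only [profile]
  ring

theorem profile_sub_le_sum_allowedLetters {M k : ℕ} (hk : w.minLabel ≤ k) (hkM : k ≤ M) :
    w.profile M k - w.incrementVariance ≤ ∑ a ∈ w.allowedLetters k,
      w.scale * w.ratio ^ w.loss a * w.profile M (k + 1 - w.loss a) := by
  have hneg : ∀ a ∉ w.allowedLetters k,
      0 ≤ -(w.scale * w.ratio ^ w.loss a * w.profile M (k + 1 - w.loss a)) := by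
    intro a ha
    rw [mem_allowedLetters, Allowed, not_le] at ha
    have ha' : (k : ℝ) + 1 + 1 ≤ w.minLabel + w.loss a := mod_cast ha
    have hkM' : (w.minLabel : ℝ) ≤ M := mod_cast hk.trans hkM
    exact neg_nonneg.2 (mul_nonpos_of_nonneg_of_nonpos (w.weight_pos a).le
      (mul_nonpos_of_nonpos_of_nonneg (by linarith) (by linarith)))
  have hle := sum_le_hasSum _ hneg (w.hasSum_weight_mul_profile M k).neg
  rw [Finset.sum_neg_distrib] at hle
  exact neg_le_neg_iff.1 hle

/-- A function of the label that is almost an eigenvector, of eigenvalue `growthRate`, of the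
transfer operator of the walk killed at `M`. -/
noncomputable def testFunction (M k : ℕ) : ℝ :=
  if w.minLabel ≤ k ∧ k < M then (1 / w.ratio) ^ k * w.profile M k else 0

theorem testFunction_nonneg (M k : ℕ) : 0 ≤ w.testFunction M k := by
  rw [testFunction]
  split_ifs with hk
  · have hk₁ : (w.minLabel : ℝ) ≤ k := mod_cast hk.1
    have hk₂ : (k : ℝ) < M := mod_cast hk.2
    exact mul_nonneg (pow_nonneg (one_div_pos.2 w.ratio_pos).le _)
      (mul_nonneg (by linarith) (by linarith))
  · exact le_rfl

theorem testFunction_pos {M k : ℕ} (hk : w.minLabel ≤ k) (hkM : k < M) :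
    0 < w.testFunction M k := by
  have hk₁ : (w.minLabel : ℝ) ≤ k := mod_cast hk
  have hk₂ : (k : ℝ) < M := mod_cast hkM
  rw [testFunction, if_pos ⟨hk, hkM⟩]
  exact mul_pos (pow_pos (one_div_pos.2 w.ratio_pos) _) (mul_pos (by linarith) (by linarith))

theorem testFunction_le_sum_range (M k : ℕ) :
    w.testFunction M k ≤ ∑ i ∈ Finset.range M, w.testFunction M i := by
  by_cases hk : k < M
  · exact Finset.single_le_sum (fun i _ => w.testFunction_nonneg M i) (Finset.mem_range.2 hk)
  · rw [testFunction, if_neg fun h => hk h.2]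
    exact Finset.sum_nonneg fun i _ => w.testFunction_nonneg M i

theorem pow_mul_profile_le_testFunction {M k : ℕ} (hk : w.minLabel ≤ k) :
    (1 / w.ratio) ^ k * w.profile M k ≤ w.testFunction M k := by
  by_cases hkM : k < M
  · rw [testFunction, if_pos ⟨hk, hkM⟩]
  · refine le_trans ?_ (w.testFunction_nonneg M k)
    have hk₁ : (w.minLabel : ℝ) ≤ k := mod_cast hk
    have hk₂ : (M : ℝ) ≤ k := mod_cast not_lt.1 hkM
    exact mul_nonpos_of_nonneg_of_nonpos (pow_nonneg (one_div_pos.2 w.ratio_pos).le _)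
      (mul_nonpos_of_nonneg_of_nonpos (by linarith) (by linarith))

theorem weight_mul_profile_le_testFunction_next {M k a : ℕ} (ha : w.Allowed k a) :
    (1 / w.ratio) ^ k * w.growthRate *
      (w.scale * w.ratio ^ w.loss a * w.profile M (k + 1 - w.loss a)) ≤
        w.testFunction M (w.next k a) := by
  have hscale := w.scale_pos
  have hratio := w.ratio_pos
  rw [Allowed] at ha
  have hnext : k + 1 = w.next k a + w.loss a := by rw [next]; omega
  have hcast : ((w.next k a : ℕ) : ℝ) = k + 1 - w.loss a :=
    eq_sub_of_add_eq (mod_cast hnext.symm)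
  have hpow : w.ratio ^ w.loss a * w.ratio ^ w.next k a = w.ratio ^ k * w.ratio := by
    rw [← pow_add, ← pow_succ, hnext, add_comm]
  refine le_trans (le_of_eq ?_) (w.pow_mul_profile_le_testFunction (by rw [next]; omega))
  rw [hcast, growthRate, one_div_pow, one_div_pow]
  field_simp
  rw [← hpow]
  ring

theorem testFunction_le_sum_allowedLetters {M : ℕ} {δ : ℝ}
    (hM : w.incrementVariance ≤ δ * (M - w.minLabel)) (hδ : 0 ≤ δ) (k : ℕ) :
    w.growthRate * (1 - δ) * w.testFunction M k ≤
      ∑ a ∈ w.allowedLetters k, w.testFunction M (w.next k a) := by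
  by_cases hk : w.minLabel ≤ k ∧ k < M
  · have hk₁ : (w.minLabel : ℝ) ≤ k := mod_cast hk.1
    have hk₂ : (k : ℝ) + 1 ≤ M := mod_cast hk.2
    have hprofile : (M : ℝ) - w.minLabel ≤ w.profile M k := by rw [profile]; nlinarith
    have hvariance : (1 - δ) * w.profile M k ≤ w.profile M k - w.incrementVariance := by
      linarith [mul_le_mul_of_nonneg_left hprofile hδ]
    have hfactor : 0 ≤ (1 / w.ratio) ^ k * w.growthRate :=
      mul_nonneg (pow_nonneg (one_div_pos.2 w.ratio_pos).le _) w.growthRate_pos.le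
    calc w.growthRate * (1 - δ) * w.testFunction M k
        = (1 / w.ratio) ^ k * w.growthRate * ((1 - δ) * w.profile M k) := by
          rw [testFunction, if_pos hk]; ring
      _ ≤ (1 / w.ratio) ^ k * w.growthRate * ∑ a ∈ w.allowedLetters k,
            w.scale * w.ratio ^ w.loss a * w.profile M (k + 1 - w.loss a) :=
          mul_le_mul_of_nonneg_left (hvariance.trans
            (w.profile_sub_le_sum_allowedLetters hk.1 hk.2.le)) hfactor
      _ ≤ _ := by
          rw [Finset.mul_sum]
          exact Finset.sum_le_sum fun a ha =>
            w.weight_mul_profile_le_testFunction_next (w.mem_allowedLetters.1 ha)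
  · rw [testFunction, if_neg hk, mul_zero]
    exact Finset.sum_nonneg fun a _ => w.testFunction_nonneg M _

theorem testFunction_mul_pow_le_sum_validWords {M : ℕ} {δ : ℝ}
    (hM : w.incrementVariance ≤ δ * (M - w.minLabel)) (hδ : 0 ≤ δ) (hδ₁ : δ ≤ 1) {k₀ : ℕ}
    (hk₀ : w.minLabel ≤ k₀ + 1) (n : ℕ) :
    w.testFunction M (k₀ + 1) * (w.growthRate * (1 - δ)) ^ n ≤
      ∑ l ∈ w.validWords k₀ (n + 1), w.testFunction M (w.label k₀ l) := by
  induction n with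
  | zero =>
    have hmem : [0] ∈ w.validWords k₀ 1 := w.mem_validWords.2
      ⟨rfl, trivial, by rw [Allowed, label, w.loss_zero]; exact hk₀⟩
    have hlabel : w.label k₀ [0] = k₀ + 1 := by rw [label, label, next, w.loss_zero, Nat.sub_zero]
    rw [pow_zero, mul_one, ← hlabel]
    exact Finset.single_le_sum (f := fun l => w.testFunction M (w.label k₀ l))
      (fun l _ => w.testFunction_nonneg M _) hmem
  | succ n ih =>
    have hrate : 0 ≤ w.growthRate * (1 - δ) :=
      mul_nonneg w.growthRate_pos.le (sub_nonneg.2 hδ₁)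
    rw [sum_validWords_succ, pow_succ', mul_left_comm]
    refine (mul_le_mul_of_nonneg_left ih hrate).trans ?_
    rw [Finset.mul_sum]
    exact Finset.sum_le_sum fun l _ => w.testFunction_le_sum_allowedLetters hM hδ _

theorem exists_mul_pow_le_card_validWords {k₀ : ℕ} (hk₀ : w.minLabel ≤ k₀ + 1) {δ : ℝ}
    (hδ : 0 < δ) (hδ₁ : δ ≤ 1) : ∃ c : ℝ, 0 < c ∧
      ∀ n, c * (w.growthRate * (1 - δ)) ^ n ≤ ((w.validWords k₀ (n + 1)).card : ℝ) := by
  obtain ⟨M, hM⟩ := exists_nat_gt (max (k₀ + 1 : ℝ) (w.minLabel + w.incrementVariance / δ))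
  have hkM : k₀ + 1 < M := by exact_mod_cast (le_max_left _ _).trans_lt hM
  have hVM : w.incrementVariance ≤ δ * (M - w.minLabel) := by
    rw [← div_le_iff₀' hδ]
    linarith [(le_max_right _ _).trans_lt hM]
  set U := ∑ i ∈ Finset.range M, w.testFunction M i
  have hpos := w.testFunction_pos hk₀ hkM
  have hU : 0 < U := hpos.trans_le (w.testFunction_le_sum_range M _)
  refine ⟨w.testFunction M (k₀ + 1) / U, div_pos hpos hU, fun n => ?_⟩
  rw [div_mul_eq_mul_div, div_le_iff₀ hU, ← nsmul_eq_mul]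
  exact (w.testFunction_mul_pow_le_sum_validWords hVM hδ.le hδ₁ hk₀ n).trans
    (Finset.sum_le_card_nsmul _ _ _ fun l _ => w.testFunction_le_sum_range M _)

end LowerBound

end LabelWalk

namespace LabelWalk

variable (w : LabelWalk)

theorem label_append (k₀ : ℕ) (v l : List ℕ) :
    w.label k₀ (v ++ l) = w.label (w.label k₀ l) v := by
  induction v with
  | nil => rfl
  | cons a v ih => rw [List.cons_append, label, label, ih]

/-- All labels met along the word exceed `c`. -/
def StaysAbove (c k₀ : ℕ) (l : List ℕ) : Prop := ∀ u, u <:+ l → c < w.label k₀ u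

theorem staysAbove_cons {c k₀ a : ℕ} {l : List ℕ} :
    w.StaysAbove c k₀ (a :: l) ↔ c < w.label k₀ (a :: l) ∧ w.StaysAbove c k₀ l := by
  simp only [StaysAbove, List.suffix_cons_iff, or_imp, forall_and, forall_eq]

theorem label_succ {c k₀ : ℕ} {l : List ℕ} (hl : w.StaysAbove c k₀ l) :
    w.label (k₀ + 1) l = w.label k₀ l + 1 := by
  induction l with
  | nil => rfl
  | cons a l ih =>
    obtain ⟨hlabel, hl⟩ := w.staysAbove_cons.1 hl
    rw [label, next] at hlabel
    rw [label, label, next, next, ih hl]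
    omega

theorem StaysAbove.succ {c k₀ : ℕ} {l : List ℕ} (hl : w.StaysAbove c k₀ l) :
    w.StaysAbove c (k₀ + 1) l := fun u hu => by
  rw [w.label_succ fun v hv => hl v (hv.trans hu)]
  exact Nat.lt_succ_of_lt (hl u hu)

end LabelWalk

section Count

theorem count_le_count_add_count {p q r : ℕ → Prop} [DecidablePred p] [DecidablePred q]
    [DecidablePred r] {n : ℕ} (h : ∀ j < n, p j → q j ∨ r j) :
    Nat.count p n ≤ Nat.count q n + Nat.count r n := by
  simp only [Nat.count_eq_card_filter_range]
  refine (Finset.card_le_card fun j hj => ?_).trans (Finset.card_union_le _ _)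
  rw [Finset.mem_filter] at hj
  rw [Finset.mem_union, Finset.mem_filter, Finset.mem_filter]
  exact (h j (Finset.mem_range.1 hj.1) hj.2).imp (And.intro hj.1) (And.intro hj.1)

theorem count_exists_add_le (p : ℕ → Prop) [DecidablePred p] (h n : ℕ) :
    Nat.count (fun j => ∃ i ≤ h, p (j + i)) (n - h) ≤ (h + 1) * Nat.count p n := by
  rcases le_total n h with hn | hn
  · rw [Nat.sub_eq_zero_of_le hn, Nat.count_zero]
    exact Nat.zero_le _
  calc _ ≤ ((Finset.range (h + 1)).biUnion fun i =>
        (Finset.range (n - h)).filter fun j => p (j + i)).card := by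
        rw [Nat.count_eq_card_filter_range]
        refine Finset.card_le_card fun j hj => ?_
        obtain ⟨hj, i, hi, hp⟩ := Finset.mem_filter.1 hj
        exact Finset.mem_biUnion.2
          ⟨i, Finset.mem_range.2 (Nat.lt_succ_of_le hi), Finset.mem_filter.2 ⟨hj, hp⟩⟩
    _ ≤ ∑ i ∈ Finset.range (h + 1), Nat.count (fun j => p (j + i)) (n - h) := by
        simp only [Nat.count_eq_card_filter_range]
        exact Finset.card_biUnion_le
    _ ≤ ∑ _i ∈ Finset.range (h + 1), Nat.count p n := by
        refine Finset.sum_le_sum fun i hi => ?_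
        have hi' := Finset.mem_range.1 hi
        refine le_trans ?_ (Nat.count_monotone p (show i + (n - h) ≤ n by omega))
        simp only [Nat.count_add, Nat.add_comm _ i]
        exact Nat.le_add_left _ _
    _ = _ := by rw [Finset.sum_const, Finset.card_range, smul_eq_mul]

end Count

namespace LabelWalk

variable (w : LabelWalk)

theorem count_not_staysAbove_le (c k₀ h : ℕ) (l : List ℕ) :
    Nat.count (fun j => ¬ w.StaysAbove c (w.label k₀ (l.drop (j + h))) ((l.drop j).take h))
      (l.length - h) ≤ (h + 1) * (w.lowCount c k₀ l + 1) := by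
  calc _ ≤ Nat.count (fun j => ∃ i ≤ h, w.label k₀ (l.drop (j + i)) ≤ c) (l.length + 1 - h) := by
        refine (Nat.count_monotone _ (show l.length - h ≤ l.length + 1 - h by omega)).trans
          (Nat.count_mono_left fun j _ hj => ?_)
        simp only [StaysAbove, not_forall, not_lt] at hj
        obtain ⟨u, ⟨v, huv⟩, hu⟩ := hj
        refine ⟨v.length, ?_, le_of_eq_of_le ?_ hu⟩
        · exact (huv ▸ List.sublist_append_left v u).length_le.trans (List.length_take_le _ _)
        · have hsplit : l.drop j = v ++ (u ++ l.drop (j + h)) := by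
            rw [← List.append_assoc, huv, ← List.drop_drop, List.take_append_drop]
          rw [← List.drop_drop, hsplit, List.drop_left, label_append]
    _ ≤ (h + 1) * Nat.count (fun i => w.label k₀ (l.drop i) ≤ c) (l.length + 1) :=
        count_exists_add_le (fun i => w.label k₀ (l.drop i) ≤ c) h _
    _ ≤ _ := by
        gcongr
        rw [Nat.count_succ']
        exact Nat.add_le_add_left (by split_ifs <;> simp) _

end LabelWalk

/-- The heights `g` and `g'` of one entry, `t` letters after its insertion, in the two evolutions
that follow the same word from labels `k` and `k + 1`: either the entry is near the bottom and
has the same height in both, or it is near the top and its height is shifted by `1`. -/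
def Coupled (t k g g' : ℕ) : Prop :=
  (g' = g ∧ 1 ≤ g ∧ g ≤ t + 2) ∨ (g' = g + 1 ∧ k ≤ g + t + 2 ∧ g ≤ k)

theorem Coupled.mono {t t' k g g' : ℕ} (ht : t ≤ t') (h : Coupled t k g g') :
    Coupled t' k g g' := by
  rw [Coupled] at *
  omega

/-- A rule for growing permutations, one entry at the right end at a time, by inserting it into one
of `k` active sites. The letter `a` stands for an insertion into the site `site k a`, which splits
this site into two. Of the resulting `k + 1` sites, numbered from below, those in
`Remains k (site k a)` stay active; `rank k j v` is the number of these among the first `v`.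
The bounds `20` leave room for finitely many exceptions near the bottom and near the top. -/
structure GrowthScheme extends LabelWalk where
  Remains : ℕ → ℕ → ℕ → Prop
  site : ℕ → ℕ → ℕ
  rank : ℕ → ℕ → ℕ → ℕ
  two_le_minLabel : 2 ≤ minLabel
  minLabel_le_three : minLabel ≤ 3
  count_remains : ∀ k j v, j < k → Nat.count (Remains k j) v = rank k j v
  site_lt : ∀ k a, 2 ≤ k → toLabelWalk.Allowed k a → site k a < k
  site_inj : ∀ k a b, 2 ≤ k → toLabelWalk.Allowed k a → toLabelWalk.Allowed k b →
    site k a = site k b → a = b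
  rank_site : ∀ k a, 2 ≤ k → toLabelWalk.Allowed k a → rank k (site k a) (k + 1) =
    toLabelWalk.next k a
  coupled_new : ∀ k a, 20 ≤ k → 20 ≤ toLabelWalk.next k a → Coupled 1 (toLabelWalk.next k a)
    (rank k (site k a) (site k a + 1)) (rank (k + 1) (site (k + 1) a) (site (k + 1) a + 1))
  le_site_iff : ∀ t k a g g', 2 * t + 20 ≤ k → 2 * t + 20 ≤ toLabelWalk.next k a →
    Coupled t k g g' → (g ≤ site k a ↔ g' ≤ site (k + 1) a)
  coupled_old : ∀ t k a g g', 2 * t + 20 ≤ k → 2 * t + 20 ≤ toLabelWalk.next k a →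
    Coupled t k g g' → Coupled (t + 1) (toLabelWalk.next k a)
      (rank k (site k a) (if g ≤ site k a then g else g + 1))
      (rank (k + 1) (site (k + 1) a) (if g' ≤ site (k + 1) a then g' else g' + 1))

namespace GrowthScheme

variable (s : GrowthScheme)

section Heights

/-- The number of active sites below the entry inserted by the letter `x - 1` of the word, counted
from the last one. The entry `0` is there before the first insertion; its height is not used. -/
noncomputable def height (k₀ : ℕ) : List ℕ → ℕ → ℕ
  | [], _ => 0
  | a :: l, x =>
    let k := s.label k₀ l
    let j := s.site k a
    s.rank k j (if x = l.length + 1 then j + 1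
      else if height k₀ l x ≤ j then height k₀ l x else height k₀ l x + 1)

/-- The entry `x` is smaller than the later entry `y`. -/
def Below (k₀ : ℕ) : List ℕ → ℕ → ℕ → Prop
  | [], _, _ => False
  | a :: l, x, y =>
    if y = l.length + 1 then s.height k₀ l x ≤ s.site (s.label k₀ l) a else Below k₀ l x y

theorem height_append (k₀ : ℕ) (v l : List ℕ) {x : ℕ} (hx : 1 ≤ x) (hxv : x ≤ v.length) :
    s.height k₀ (v ++ l) (x + l.length) = s.height (s.label k₀ l) v x := by
  induction v with
  | nil => exact absurd (hx.trans hxv) (by simp)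
  | cons a v ih =>
    simp only [List.cons_append, height, LabelWalk.label_append, List.length_append]
    rw [List.length_cons] at hxv
    by_cases hlast : x = v.length + 1
    · rw [if_pos hlast, if_pos (by omega)]
    · rw [if_neg hlast, if_neg (by omega), ih (by omega)]

theorem below_append (k₀ : ℕ) (v l : List ℕ) {x y : ℕ} (hx : 1 ≤ x) (hxy : x < y)
    (hy : y ≤ v.length) :
    s.Below k₀ (v ++ l) (x + l.length) (y + l.length) ↔ s.Below (s.label k₀ l) v x y := by
  induction v with
  | nil => exact absurd (hxy.trans_le hy) (by simp)
  | cons a v ih =>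
    simp only [List.cons_append, Below, LabelWalk.label_append, List.length_append]
    rw [List.length_cons] at hy
    by_cases hlast : y = v.length + 1
    · rw [if_pos hlast, if_pos (by omega), height_append _ _ _ _ hx (by omega)]
    · rw [if_neg hlast, if_neg (by omega), ih (by omega)]

theorem below_append_of_le_length (k₀ : ℕ) (v : List ℕ) {l : List ℕ} (x : ℕ) {y : ℕ}
    (hy : y ≤ l.length) : s.Below k₀ (v ++ l) x y ↔ s.Below k₀ l x y := by
  induction v with
  | nil => rfl
  | cons a v ih =>
    rw [List.cons_append, Below, List.length_append, if_neg (by omega), ih]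

end Heights

section Locality

theorem coupled_height {h k₀ : ℕ} {l : List ℕ} (hlen : l.length ≤ h)
    (hl : s.StaysAbove (2 * h + 20) k₀ l) {x : ℕ} (hx : 1 ≤ x) (hxl : x ≤ l.length) :
    Coupled l.length (s.label k₀ l) (s.height k₀ l x) (s.height (k₀ + 1) l x) := by
  induction l with
  | nil => exact absurd (hx.trans hxl) (by simp)
  | cons a l ih =>
    obtain ⟨hnext, hl⟩ := s.staysAbove_cons.1 hl
    have hlabel := hl l List.suffix_rfl
    rw [List.length_cons] at *
    simp only [height, LabelWalk.label, s.label_succ hl] at hnext ⊢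
    by_cases hlast : x = l.length + 1
    · simp only [if_pos hlast]
      exact (s.coupled_new _ _ (by omega) (by omega)).mono (by omega)
    · simp only [if_neg hlast]
      exact s.coupled_old _ _ _ _ _ (by omega) (by omega) (ih (by omega) hl (by omega))

theorem below_succ_iff {h k₀ : ℕ} {l : List ℕ} (hlen : l.length ≤ h)
    (hl : s.StaysAbove (2 * h + 20) k₀ l) {x y : ℕ} (hx : 1 ≤ x) (hxy : x < y)
    (hy : y ≤ l.length) : s.Below (k₀ + 1) l x y ↔ s.Below k₀ l x y := by
  induction l with
  | nil => exact absurd (hxy.trans_le hy) (by simp)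
  | cons a l ih =>
    obtain ⟨hnext, hl⟩ := s.staysAbove_cons.1 hl
    have hlabel := hl l List.suffix_rfl
    rw [List.length_cons] at *
    rw [LabelWalk.label] at hnext
    simp only [Below, s.label_succ hl]
    by_cases hlast : y = l.length + 1
    · rw [if_pos hlast, if_pos hlast]
      exact (s.le_site_iff l.length _ _ _ _ (by omega) (by omega)
        (s.coupled_height (by omega) hl hx (by omega))).symm
    · rw [if_neg hlast, if_neg hlast]
      exact ih (by omega) hl (by omega)

/-- The entries inserted by the word `v`, started at the label `k₀`, are in the relative order
given by `Q`. -/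
def Realizes (Q : ℕ → ℕ → Prop) (k₀ : ℕ) (v : List ℕ) : Prop :=
  ∀ x y, x < y → y < v.length → (s.Below k₀ v (x + 1) (y + 1) ↔ Q x y)

variable (Q : ℕ → ℕ → Prop)

theorem realizes_iff_of_le {k₀ K : ℕ} {v : List ℕ}
    (hv : s.StaysAbove (2 * v.length + 20) k₀ v) (hK : k₀ ≤ K) :
    s.Realizes Q K v ↔ s.Realizes Q k₀ v := by
  suffices s.StaysAbove (2 * v.length + 20) K v ∧ (s.Realizes Q K v ↔ s.Realizes Q k₀ v) from this.2
  induction K, hK using Nat.le_induction with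
  | base => exact ⟨hv, Iff.rfl⟩
  | succ K _ ih =>
    refine ⟨ih.1.succ, Iff.trans ?_ ih.2⟩
    exact forall₄_congr fun x y hxy hy => by
      rw [s.below_succ_iff le_rfl ih.1 (by omega) (by omega) (by omega)]

/-- The words whose first `h` letters realize `Q` from all large labels. -/
def patternEvent (h : ℕ) : Set (List ℕ) := {v | ∀ᶠ k in atTop, s.Realizes Q k (v.take h)}

theorem mem_patternEvent_iff {h k₀ : ℕ} {v : List ℕ}
    (hv : s.StaysAbove (2 * h + 20) k₀ (v.take h)) :
    v ∈ s.patternEvent Q h ↔ s.Realizes Q k₀ (v.take h) := by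
  have hlen := List.length_take_le h v
  have hconst : ∀ᶠ k in atTop, (s.Realizes Q k (v.take h) ↔ s.Realizes Q k₀ (v.take h)) := by
    filter_upwards [eventually_ge_atTop k₀] with K hK
    exact s.realizes_iff_of_le Q (fun u hu => lt_of_le_of_lt (by omega) (hv u hu)) hK
  rw [patternEvent, Set.mem_ofPred_eq, eventually_congr hconst, eventually_const]

end Locality

section Occurrences

variable (Q : ℕ → ℕ → Prop)

/-- The number of windows of length `h` of a word that realize `Q`. -/
noncomputable def occCount (h k₀ : ℕ) (l : List ℕ) : ℕ :=
  Nat.count (fun j => s.Realizes Q (s.label k₀ (l.drop (j + h))) ((l.drop j).take h))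
    (l.length + 1 - h)

theorem take_drop_mem_patternEvent_iff {h k₀ j : ℕ} {l : List ℕ}
    (hj : s.StaysAbove (2 * h + 20) (s.label k₀ (l.drop (j + h))) ((l.drop j).take h)) :
    (l.drop j).take (h + 1) ∈ s.patternEvent Q h ↔
      s.Realizes Q (s.label k₀ (l.drop (j + h))) ((l.drop j).take h) := by
  have htake : ((l.drop j).take (h + 1)).take h = (l.drop j).take h := by
    rw [List.take_take, min_eq_left h.le_succ]
  rw [← htake] at hj ⊢
  exact s.mem_patternEvent_iff Q hj

/-- Windows of length `h + 1` are used so that their length is positive even when `h = 0`. -/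
theorem occCount_le (h k₀ : ℕ) (l : List ℕ) :
    s.occCount Q h k₀ l ≤ windowCount (h + 1) (s.patternEvent Q h) l +
      (h + 1) * (s.lowCount (2 * h + 20) k₀ l + 1) + 1 := by
  rw [windowCount, Nat.add_sub_add_right, occCount]
  refine (Nat.count_monotone _ (show _ ≤ l.length - h + 1 by omega)).trans ?_
  rw [Nat.count_succ]
  refine Nat.add_le_add ?_ (by split_ifs <;> simp)
  refine (count_le_count_add_count fun j _ hj => ?_).trans
    (Nat.add_le_add_left (s.count_not_staysAbove_le (2 * h + 20) k₀ h l) _)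
  by_contra! hcon
  exact hcon.1 ((s.take_drop_mem_patternEvent_iff Q hcon.2).2 hj)

theorem length_le_occCount_add (h k₀ : ℕ) (l : List ℕ) :
    l.length ≤ s.occCount Q h k₀ l + windowCount (h + 1) (s.patternEvent Q h)ᶜ l +
      (h + 1) * (s.lowCount (2 * h + 20) k₀ l + 1) + h := by
  let occursAt (j : ℕ) : Prop :=
    s.Realizes Q (s.label k₀ (l.drop (j + h))) ((l.drop j).take h)
  let highAt (j : ℕ) : Prop :=
    s.StaysAbove (2 * h + 20) (s.label k₀ (l.drop (j + h))) ((l.drop j).take h)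
  let outsideAt (j : ℕ) : Prop := (l.drop j).take (h + 1) ∈ (s.patternEvent Q h)ᶜ
  have hcover : l.length - h ≤ Nat.count occursAt (l.length - h) +
      Nat.count (fun j => outsideAt j ∨ ¬ highAt j) (l.length - h) := by
    calc l.length - h = Nat.count (fun _ => True) (l.length - h) := by rw [Nat.count_true]
      _ ≤ _ := count_le_count_add_count fun j _ _ => by
        by_contra! hcon
        exact hcon.2.1 ((s.take_drop_mem_patternEvent_iff Q hcon.2.2).not.2 hcon.1)
  have hsplit : Nat.count (fun j => outsideAt j ∨ ¬ highAt j) (l.length - h) ≤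
      Nat.count outsideAt (l.length - h) + Nat.count (fun j => ¬ highAt j) (l.length - h) :=
    count_le_count_add_count fun _ _ => id
  have hlow := s.count_not_staysAbove_le (2 * h + 20) k₀ h l
  have hmono : Nat.count occursAt (l.length - h) ≤ s.occCount Q h k₀ l :=
    Nat.count_monotone _ (by omega)
  have hwindow : windowCount (h + 1) (s.patternEvent Q h)ᶜ l =
      Nat.count outsideAt (l.length - h) := by
    rw [windowCount, Nat.add_sub_add_right]
    congr
  dsimp only [highAt] at *
  omega

end Occurrences

end GrowthScheme

section AppendLast

/-- The permutation obtained from `σ` by appending the last value `m`; the old values from `m` on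
are shifted up. -/
def appendLast {n : ℕ} (σ : Perm (Fin n)) (m : Fin (n + 1)) : Perm (Fin (n + 1)) :=
  (finSuccEquiv' (Fin.last n)).trans ((optionCongr σ).trans (finSuccEquiv' m).symm)

/-- The value that `v` becomes when `m` is appended. -/
def shiftAbove (m v : ℕ) : ℕ := if v < m then v else v + 1

variable {n : ℕ} (σ : Perm (Fin n)) (m : Fin (n + 1))

@[simp]
theorem appendLast_last : appendLast σ m (Fin.last n) = m := by
  simp [appendLast]

theorem appendLast_castSucc (i : Fin n) : appendLast σ m i.castSucc = m.succAbove (σ i) := by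
  have hi : finSuccEquiv' (Fin.last n) i.castSucc = some i := by
    rw [← Fin.succAbove_last]
    exact finSuccEquiv'_succAbove _ _
  simp [appendLast, hi]

@[simp]
theorem coe_appendLast_castSucc (i : Fin n) :
    (appendLast σ m i.castSucc : ℕ) = shiftAbove m (σ i) := by
  rw [appendLast_castSucc, Fin.succAbove, shiftAbove]
  simp only [Fin.lt_def, Fin.val_castSucc]
  split_ifs <;> simp

theorem appendLast_castSucc_lt_iff (i j : Fin n) :
    appendLast σ m i.castSucc < appendLast σ m j.castSucc ↔ σ i < σ j := by
  rw [appendLast_castSucc, appendLast_castSucc, (Fin.strictMono_succAbove m).lt_iff_lt]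

theorem appendLast_bijective (n : ℕ) :
    Function.Bijective fun q : Perm (Fin n) × Fin (n + 1) => appendLast q.1 q.2 := by
  rw [Fintype.bijective_iff_injective_and_card]
  refine ⟨?_, by simp [Fintype.card_perm, Nat.factorial_succ, mul_comm]⟩
  rintro ⟨σ, m⟩ ⟨τ, m'⟩ h
  obtain rfl : m = m' := by
    simpa only [appendLast_last] using congrArg (fun e => e (Fin.last n)) h
  have hστ : σ = τ := Equiv.ext fun i => m.succAbove_right_injective <| by
    simpa only [appendLast_castSucc] using congrArg (fun e => e i.castSucc) h
  rw [hστ]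

/-- The permutation in the relative order of all entries of `σ` but the last one. -/
noncomputable def deleteLast (σ : Perm (Fin (n + 1))) : Perm (Fin n) :=
  ((Equiv.ofBijective _ (appendLast_bijective n)).symm σ).1

@[simp]
theorem deleteLast_appendLast : deleteLast (appendLast σ m) = σ :=
  congrArg Prod.fst ((Equiv.ofBijective _ (appendLast_bijective n)).symm_apply_apply (σ, m))

theorem exists_eq_appendLast (σ : Perm (Fin (n + 1))) : ∃ τ m, σ = appendLast τ m :=
  have ⟨q, hq⟩ := (appendLast_bijective n).2 σ
  ⟨q.1, q.2, hq.symm⟩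

end AppendLast

section SiteBefore

/-- The site, before the insertion of a value into the site `m`, that contains the site `x` present
after the insertion. -/
def siteBefore (m x : ℕ) : ℕ := if x ≤ m then x else x - 1

theorem siteBefore_self (m : ℕ) : siteBefore m m = m := if_pos le_rfl

theorem siteBefore_succ {m v : ℕ} (hv : m ≤ v) : siteBefore m (v + 1) = v :=
  if_neg (Nat.not_le_of_lt (Nat.lt_succ_of_le hv))

theorem count_congr {p q : ℕ → Prop} [DecidablePred p] [DecidablePred q] {n : ℕ}
    (h : ∀ x < n, p x ↔ q x) : Nat.count p n = Nat.count q n :=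
  le_antisymm (Nat.count_mono_left fun x hx => (h x hx).1)
    (Nat.count_mono_left fun x hx => (h x hx).2)

variable (S : ℕ → Prop)

theorem count_siteBefore_of_le {m v : ℕ} (hv : v ≤ m) :
    Nat.count (fun x => S (siteBefore m x)) v = Nat.count S v := by
  refine count_congr fun x hx => ?_
  rw [siteBefore, if_pos (by omega)]

theorem count_siteBefore_succ {m v : ℕ} (hm : S m) (hv : m ≤ v) :
    Nat.count (fun x => S (siteBefore m x)) (v + 1) = Nat.count S v + 1 := by
  induction v, hv using Nat.le_induction with
  | base =>
    rw [Nat.count_succ, count_siteBefore_of_le S le_rfl, siteBefore_self, if_pos hm]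
  | succ v hv ih =>
    rw [Nat.count_succ, ih, siteBefore_succ (by omega), Nat.count_succ S v]
    omega

theorem count_and_count (R : ℕ → Prop) (v : ℕ) :
    Nat.count (fun x => S x ∧ R (Nat.count S x)) v = Nat.count R (Nat.count S v) := by
  induction v with
  | zero => simp only [Nat.count_zero]
  | succ v ih =>
    rw [Nat.count_succ, Nat.count_succ, ih]
    by_cases h : S v
    · simp [h, Nat.count_succ]
    · simp [h]

end SiteBefore

/-- A description by `s` of how the permutations of a family `F` grow from those of size `1`. The
site `m` of `σ` lies just below the value `m`. `F` may use only some of the active sites: those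
that are the site of an allowed letter. -/
structure GeneratingTree (s : GrowthScheme) (F : ∀ n, Perm (Fin n) → Prop) where
  Active : ∀ {n : ℕ}, Perm (Fin n) → ℕ → Prop
  mem_one : ∀ σ, F 1 σ
  active_zero : ∀ σ : Perm (Fin 1), Active σ 0
  active_one : ∀ σ : Perm (Fin 1), Active σ 1
  mem_of_appendLast : ∀ {n : ℕ} {σ : Perm (Fin (n + 1))} {m : Fin (n + 2)},
    F (n + 2) (appendLast σ m) → F (n + 1) σ
  appendLast_mem_iff : ∀ {n : ℕ} {σ : Perm (Fin (n + 1))} (m : Fin (n + 2)), F (n + 1) σ →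
    2 ≤ Nat.count (Active σ) (n + 2) → (F (n + 2) (appendLast σ m) ↔ Active σ m ∧
      ∃ a, s.Allowed (Nat.count (Active σ) (n + 2)) a ∧
        s.site (Nat.count (Active σ) (n + 2)) a = Nat.count (Active σ) m)
  active_appendLast_iff : ∀ {n : ℕ} {σ : Perm (Fin (n + 1))} {m : Fin (n + 2)}, Active σ m →
    ∀ x ≤ n + 2, (Active (appendLast σ m) x ↔ Active σ (siteBefore m x) ∧
      s.Remains (Nat.count (Active σ) (n + 2)) (Nat.count (Active σ) m)
        (Nat.count (fun y => Active σ (siteBefore m y)) x))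

namespace GrowthScheme

variable (s : GrowthScheme)

theorem two_le_label {l : List ℕ} (hl : s.Valid 2 l) : 2 ≤ s.label 2 l := by
  cases l with
  | nil => exact le_rfl
  | cons a l =>
    have hallowed := hl.2
    have hmin := s.two_le_minLabel
    simp only [LabelWalk.label, LabelWalk.next, LabelWalk.Allowed] at *
    omega

end GrowthScheme

namespace GeneratingTree

variable {s : GrowthScheme} {F : ∀ n, Perm (Fin n) → Prop} (T : GeneratingTree s F) {n : ℕ}

/-- The number of active sites. -/
noncomputable def label (σ : Perm (Fin n)) : ℕ := Nat.count (T.Active σ) (n + 1)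

/-- The letter that stands for the insertion into the site `m`. -/
noncomputable def letter (σ : Perm (Fin n)) (m : ℕ) : ℕ :=
  sInf {a | s.Allowed (T.label σ) a ∧ s.site (T.label σ) a = Nat.count (T.Active σ) m}

/-- The word of the letters inserted, the last one first. -/
noncomputable def code : ∀ {n : ℕ}, Perm (Fin (n + 1)) → List ℕ
  | 0, _ => []
  | n + 1, σ => T.letter (deleteLast σ) (σ (Fin.last (n + 1))) :: code (deleteLast σ)

theorem code_appendLast (σ : Perm (Fin (n + 1))) (m : Fin (n + 2)) :
    T.code (appendLast σ m) = T.letter σ m :: T.code σ := by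
  rw [code, deleteLast_appendLast, appendLast_last]

theorem length_code (σ : Perm (Fin (n + 1))) : (T.code σ).length = n := by
  induction n with
  | zero => rfl
  | succ n ih => rw [code, List.length_cons, ih]

section Step

variable {T} {σ : Perm (Fin (n + 1))} {m : Fin (n + 2)}

theorem count_active_lt_label (hm : T.Active σ m) : Nat.count (T.Active σ) m < T.label σ :=
  Nat.count_strict_mono hm m.isLt

theorem lt_iff_count_active_le (hm : T.Active σ m) (v : ℕ) :
    v < m ↔ Nat.count (T.Active σ) (v + 1) ≤ Nat.count (T.Active σ) m := by
  refine ⟨fun h => Nat.count_monotone _ h, fun h => ?_⟩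
  by_contra! hle
  exact absurd h (Nat.count_strict_mono hm (Nat.lt_succ_of_le hle)).not_ge

theorem count_active_appendLast (hm : T.Active σ m) {v : ℕ} (hv : v ≤ n + 3) :
    Nat.count (T.Active (appendLast σ m)) v = s.rank (T.label σ) (Nat.count (T.Active σ) m)
      (Nat.count (fun x => T.Active σ (siteBefore m x)) v) := by
  rw [← s.count_remains _ _ _ (count_active_lt_label hm), ← count_and_count]
  exact count_congr fun x hx => T.active_appendLast_iff hm x (by omega)

theorem count_active_appendLast_of_le (hm : T.Active σ m) {v : ℕ} (hv : v ≤ m) :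
    Nat.count (T.Active (appendLast σ m)) v =
      s.rank (T.label σ) (Nat.count (T.Active σ) m) (Nat.count (T.Active σ) v) := by
  rw [count_active_appendLast hm (by omega), count_siteBefore_of_le _ hv]

theorem count_active_appendLast_succ (hm : T.Active σ m) {v : ℕ} (hmv : m ≤ v) (hv : v ≤ n + 2) :
    Nat.count (T.Active (appendLast σ m)) (v + 1) =
      s.rank (T.label σ) (Nat.count (T.Active σ) m) (Nat.count (T.Active σ) v + 1) := by
  rw [count_active_appendLast hm (by omega), count_siteBefore_succ _ hm hmv]

variable (T) (hF : F (n + 2) (appendLast σ m)) (hσ : 2 ≤ T.label σ)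
include hF hσ

theorem active_of_mem : T.Active σ m :=
  ((T.appendLast_mem_iff m (T.mem_of_appendLast hF) hσ).1 hF).1

theorem letter_spec : s.Allowed (T.label σ) (T.letter σ m) ∧
    s.site (T.label σ) (T.letter σ m) = Nat.count (T.Active σ) m :=
  Nat.sInf_mem ((T.appendLast_mem_iff m (T.mem_of_appendLast hF) hσ).1 hF).2

theorem label_appendLast : T.label (appendLast σ m) = s.next (T.label σ) (T.letter σ m) := by
  obtain ⟨hallowed, hsite⟩ := T.letter_spec hF hσ
  rw [label, count_active_appendLast_succ (T.active_of_mem hF hσ) (by omega) le_rfl, ← hsite]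
  exact s.rank_site _ _ hσ hallowed

end Step

section Code

theorem valid_code_and_label_code {σ : Perm (Fin (n + 1))} (hσ : F (n + 1) σ) :
    s.Valid 2 (T.code σ) ∧ s.label 2 (T.code σ) = T.label σ := by
  induction n with
  | zero =>
    refine ⟨trivial, ?_⟩
    rw [label, Nat.count_succ, Nat.count_succ, Nat.count_zero, if_pos (T.active_zero σ),
      if_pos (T.active_one σ)]
    rfl
  | succ n ih =>
    obtain ⟨σ, m, rfl⟩ := exists_eq_appendLast σ
    obtain ⟨hvalid, hlabel⟩ := ih (T.mem_of_appendLast hσ)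
    have hlabel₂ : 2 ≤ T.label σ := hlabel ▸ s.two_le_label hvalid
    rw [code_appendLast, LabelWalk.Valid, LabelWalk.label, hlabel, T.label_appendLast hσ hlabel₂]
    exact ⟨⟨hvalid, (T.letter_spec hσ hlabel₂).1⟩, rfl⟩

theorem valid_code {σ : Perm (Fin (n + 1))} (hσ : F (n + 1) σ) : s.Valid 2 (T.code σ) :=
  (T.valid_code_and_label_code hσ).1

theorem label_code {σ : Perm (Fin (n + 1))} (hσ : F (n + 1) σ) :
    s.label 2 (T.code σ) = T.label σ :=
  (T.valid_code_and_label_code hσ).2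

theorem two_le_label {σ : Perm (Fin (n + 1))} (hσ : F (n + 1) σ) : 2 ≤ T.label σ :=
  T.label_code hσ ▸ s.two_le_label (T.valid_code hσ)

theorem height_code {σ : Perm (Fin (n + 1))} (hσ : F (n + 1) σ) (x : Fin (n + 1))
    (hx : 1 ≤ (x : ℕ)) :
    s.height 2 (T.code σ) x = Nat.count (T.Active σ) (σ x + 1) := by
  induction n with
  | zero => omega
  | succ n ih =>
    obtain ⟨σ, m, rfl⟩ := exists_eq_appendLast σ
    have hF := T.mem_of_appendLast hσ
    have hm : T.Active σ m := T.active_of_mem hσ (T.two_le_label hF)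
    simp only [code_appendLast, GrowthScheme.height, length_code, label_code T hF,
      (T.letter_spec hσ (T.two_le_label hF)).2]
    cases x using Fin.lastCases with
    | last =>
      rw [if_pos (Fin.val_last _), appendLast_last,
        count_active_appendLast_succ hm le_rfl (by omega)]
    | cast x =>
      rw [Fin.val_castSucc] at hx ⊢
      rw [if_neg (by omega), ih hF x hx, coe_appendLast_castSucc, shiftAbove]
      simp only [← lt_iff_count_active_le hm]
      split_ifs with hlt
      · rw [count_active_appendLast_of_le hm hlt]
      · rw [count_active_appendLast_succ hm (by omega) (by omega)]

theorem below_code_iff {σ : Perm (Fin (n + 1))} (hσ : F (n + 1) σ) {x y : Fin (n + 1)}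
    (hx : 1 ≤ (x : ℕ)) (hxy : x < y) : s.Below 2 (T.code σ) x y ↔ σ x < σ y := by
  induction n with
  | zero => omega
  | succ n ih =>
    obtain ⟨σ, m, rfl⟩ := exists_eq_appendLast σ
    have hF := T.mem_of_appendLast hσ
    have hm : T.Active σ m := T.active_of_mem hσ (T.two_le_label hF)
    cases x using Fin.lastCases with
    | last => exact absurd hxy (Fin.le_last y).not_gt
    | cast x =>
      simp only [code_appendLast, GrowthScheme.Below, length_code, label_code T hF,
        (T.letter_spec hσ (T.two_le_label hF)).2]
      rw [Fin.val_castSucc] at hx ⊢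
      cases y using Fin.lastCases with
      | last =>
        rw [if_pos (Fin.val_last _), T.height_code hF x hx, ← lt_iff_count_active_le hm,
          appendLast_last, Fin.lt_def, coe_appendLast_castSucc, shiftAbove]
        split_ifs <;> omega
      | cast y =>
        rw [Fin.val_castSucc, if_neg (by omega), appendLast_castSucc_lt_iff]
        exact ih hF hx (Fin.castSucc_lt_castSucc_iff.1 hxy)

end Code

section Bijection

include T

theorem code_injOn : Set.InjOn T.code {σ : Perm (Fin (n + 1)) | F (n + 1) σ} := by
  induction n with
  | zero => exact fun σ _ τ _ _ => Equiv.ext fun x => Subsingleton.elim (α := Fin 1) _ _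
  | succ n ih =>
    intro σ hσ τ hτ h
    obtain ⟨σ, m, rfl⟩ := exists_eq_appendLast σ
    obtain ⟨τ, m', rfl⟩ := exists_eq_appendLast τ
    rw [code_appendLast, code_appendLast, List.cons.injEq] at h
    have hF := T.mem_of_appendLast hσ
    obtain rfl := ih hF (T.mem_of_appendLast hτ) h.2
    have hsite := (T.letter_spec hσ (T.two_le_label hF)).2
    rw [h.1, (T.letter_spec hτ (T.two_le_label hF)).2] at hsite
    rw [Fin.ext (Nat.count_injective (T.active_of_mem hτ (T.two_le_label hF))
      (T.active_of_mem hσ (T.two_le_label hF)) hsite)]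

theorem exists_code_eq {l : List ℕ} (hlen : l.length = n) (hl : s.Valid 2 l) :
    ∃ σ : Perm (Fin (n + 1)), F (n + 1) σ ∧ T.code σ = l := by
  induction n generalizing l with
  | zero => exact ⟨1, T.mem_one 1, (List.length_eq_zero_iff.1 hlen).symm⟩
  | succ n ih =>
    obtain ⟨a, l, rfl⟩ := List.exists_cons_of_length_eq_add_one hlen
    obtain ⟨σ, hσ, rfl⟩ := ih (Nat.succ_injective hlen) hl.1
    have hallowed := hl.2
    have hlabel := T.two_le_label hσ
    rw [T.label_code hσ] at hallowed
    have hsite := s.site_lt _ _ hlabel hallowed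
    set m := Nat.nth (T.Active σ) (s.site (T.label σ) a)
    have hcount : Nat.count (T.Active σ) m = s.site (T.label σ) a :=
      Nat.count_nth fun hf => hsite.trans_le (Nat.count_le_card hf _)
    have hm : m < n + 2 := Nat.nth_lt_of_lt_count hsite
    have hactive : T.Active σ m := Nat.nth_mem _ fun hf => hsite.trans_le (Nat.count_le_card hf _)
    have hF : F (n + 2) (appendLast σ ⟨m, hm⟩) :=
      (T.appendLast_mem_iff _ hσ hlabel).2 ⟨hactive, a, hallowed, hcount.symm⟩
    obtain ⟨hletter, hsite_letter⟩ := T.letter_spec hF hlabel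
    refine ⟨_, hF, ?_⟩
    rw [code_appendLast, s.site_inj _ _ _ hlabel hletter hallowed (hsite_letter.trans hcount)]

theorem card_filter_eq_card_validWords (n : ℕ) :
    (Finset.univ.filter fun σ : Perm (Fin (n + 1)) => F (n + 1) σ).card =
      (s.validWords 2 n).card := by
  refine Finset.card_bij (fun σ _ => T.code σ) ?_ ?_ ?_
  · intro σ hσ
    exact s.mem_validWords.2 ⟨T.length_code σ, T.valid_code (Finset.mem_filter.1 hσ).2⟩
  · intro σ hσ τ hτ h
    exact T.code_injOn (Finset.mem_filter.1 hσ).2 (Finset.mem_filter.1 hτ).2 h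
  · intro l hl
    obtain ⟨hlen, hvalid⟩ := s.mem_validWords.1 hl
    obtain ⟨σ, hσ, hcode⟩ := T.exists_code_eq hlen hvalid
    exact ⟨σ, Finset.mem_filter.2 ⟨Finset.mem_univ σ, hσ⟩, hcode⟩

end Bijection

end GeneratingTree

section ConsecutiveOccurrences

/-- The relative order of the entries of `π`, as a relation on natural numbers. -/
def patternLT {h : ℕ} (π : Perm (Fin h)) (x y : ℕ) : Prop :=
  ∃ (hx : x < h) (hy : y < h), π ⟨x, hx⟩ < π ⟨y, hy⟩

theorem isConsecOccAt_iff {h n : ℕ} (π : Perm (Fin h)) (σ : Perm (Fin n)) {m : ℕ}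
    (hm : m + h ≤ n) : IsConsecOccAt π σ m ↔ ∀ x y (_ : x < y) (_ : y < h),
      (σ ⟨m + x, by omega⟩ < σ ⟨m + y, by omega⟩ ↔ patternLT π x y) := by
  have hpattern (a b : Fin h) : patternLT π a b ↔ π a < π b :=
    ⟨fun ⟨_, _, hab⟩ => hab, fun hab => ⟨a.isLt, b.isLt, hab⟩⟩
  refine ⟨fun ⟨_, H⟩ x y hxy hy => (H ⟨x, hxy.trans hy⟩ ⟨y, hy⟩).trans (hpattern _ _).symm,
    fun H => ⟨hm, fun a b => ?_⟩⟩
  let τ (i : Fin h) : Fin n := σ ⟨m + i, by omega⟩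
  have hτ : Function.Injective τ := fun i j hij => by
    have := congrArg Fin.val (σ.injective hij)
    exact Fin.ext (Nat.add_left_cancel this)
  have hlt {i j : Fin h} (hij : i < j) : τ i < τ j ↔ π i < π j :=
    (H i j hij j.isLt).trans (hpattern i j)
  change τ a < τ b ↔ π a < π b
  rcases lt_trichotomy a b with hab | rfl | hab
  · exact hlt hab
  · simp only [lt_irrefl]
  · rw [← not_iff_not, not_lt, not_lt, (hτ.ne hab.ne).le_iff_lt, (π.injective.ne hab.ne).le_iff_lt]
    exact hlt hab

namespace GeneratingTree

variable {s : GrowthScheme} {F : ∀ n, Perm (Fin n) → Prop} (T : GeneratingTree s F)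
  {h n : ℕ} (π : Perm (Fin h)) {σ : Perm (Fin (n + 1))}

/-- The entry `m` of `σ` is inserted by the letter at position `n - m` of the code. -/
theorem isConsecOccAt_iff_realizes (hσ : F (n + 1) σ) {j m : ℕ} (hm : 1 ≤ m)
    (hj : j + h + m = n + 1) : IsConsecOccAt π σ m ↔ s.Realizes (patternLT π)
      (s.label 2 ((T.code σ).drop (j + h))) (((T.code σ).drop j).take h) := by
  have hlen := T.length_code σ
  have hwindow : (((T.code σ).drop j).take h).length = h := by
    rw [List.length_take, List.length_drop]
    omega
  have hbelow {x y : ℕ} (hxy : x < y) (hy : y < h) :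
      s.Below (s.label 2 ((T.code σ).drop (j + h))) (((T.code σ).drop j).take h) (x + 1) (y + 1) ↔
        σ ⟨m + x, by omega⟩ < σ ⟨m + y, by omega⟩ := by
    rw [← T.below_code_iff hσ (x := ⟨m + x, by omega⟩) (y := ⟨m + y, by omega⟩)
      (hm.trans (Nat.le_add_right _ _)) (Nat.add_lt_add_left hxy m)]
    have hsplit : T.code σ =
        (T.code σ).take j ++ (((T.code σ).drop j).take h ++ (T.code σ).drop (j + h)) := by
      rw [← List.drop_drop, List.take_append_drop, List.take_append_drop]
    have htail : m = ((T.code σ).drop (j + h)).length + 1 := by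
      rw [List.length_drop]
      omega
    rw [← s.below_append _ _ _ (by omega) (by omega) (by omega)]
    conv_rhs =>
      rw [hsplit, s.below_append_of_le_length _ _ _ (by rw [List.length_append]; dsimp only; omega)]
    dsimp only
    rw [show m + x = x + 1 + ((T.code σ).drop (j + h)).length by omega,
      show m + y = y + 1 + ((T.code σ).drop (j + h)).length by omega]
  rw [isConsecOccAt_iff π σ (by omega), GrowthScheme.Realizes, hwindow]
  exact forall₄_congr fun x y hxy hy => by rw [hbelow hxy hy]

theorem occCount_le_cOcc (hσ : F (n + 1) σ) :
    s.occCount (patternLT π) h 2 (T.code σ) ≤ cOcc π σ := by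
  rw [GrowthScheme.occCount, Nat.count_eq_card_filter_range, cOcc, T.length_code]
  refine Finset.card_le_card_of_injOn (fun j => n + 1 - h - j) (fun j hj => ?_)
    fun i hi j hj hij => ?_
  · rw [Finset.mem_coe, Finset.mem_filter, Finset.mem_range] at hj
    rw [Finset.mem_coe, Finset.mem_filter, Finset.mem_range]
    dsimp only
    exact ⟨by omega, (T.isConsecOccAt_iff_realizes π hσ (by omega) (by omega)).2 hj.2⟩
  · rw [Finset.mem_coe, Finset.mem_filter, Finset.mem_range] at hi hj
    dsimp only at hij
    omega

theorem cOcc_le_occCount_add_one (hσ : F (n + 1) σ) :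
    cOcc π σ ≤ s.occCount (patternLT π) h 2 (T.code σ) + 1 := by
  rw [GrowthScheme.occCount, Nat.count_eq_card_filter_range, cOcc, T.length_code]
  refine (Finset.card_le_card (t := insert 0 (Finset.image (fun j => n + 1 - h - j) _))
    fun m hm => ?_).trans ((Finset.card_insert_le _ _).trans
      (Nat.add_le_add_right Finset.card_image_le 1))
  have hocc := (Finset.mem_filter.1 hm).2
  have hmn : m + h ≤ n + 1 := hocc.1
  rcases Nat.eq_zero_or_pos m with rfl | hm₀
  · exact Finset.mem_insert_self _ _
  · refine Finset.mem_insert_of_mem (Finset.mem_image.2 ⟨n + 1 - h - m, ?_, by omega⟩)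
    rw [Finset.mem_filter, Finset.mem_range]
    exact ⟨by omega, (T.isConsecOccAt_iff_realizes π hσ hm₀ (by omega)).1 hocc⟩

end GeneratingTree

end ConsecutiveOccurrences

section Limit

/-- For a uniform random permutation `σ` of size `n` in `F`, the number of consecutive occurrences
of every pattern in `σ`, divided by `n`, converges in probability to a constant. -/
def HasLocalLimit (F : ∀ n, Perm (Fin n) → Prop) : Prop :=
  ∃ Λ : ∀ k : ℕ, Perm (Fin k) → ℝ,
    (∀ (k : ℕ) (π : Perm (Fin k)), 0 ≤ Λ k π ∧ Λ k π ≤ 1) ∧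
    ∀ (k : ℕ) (π : Perm (Fin k)) (ε : ℝ), 0 < ε →
      Tendsto (fun n : ℕ =>
        (((Finset.univ.filter fun σ : Perm (Fin n) => F n σ).filter
          fun σ => ε ≤ |(cOcc π σ : ℝ) / n - Λ k π|).card : ℝ) /
            (Finset.univ.filter fun σ : Perm (Fin n) => F n σ).card) atTop (nhds 0)

theorem abs_div_sub_lt {y w x x' z h n Λ e : ℝ} (hh : 0 ≤ h) (hn : 0 ≤ n) (he : 0 ≤ e)
    (hΛ : 0 ≤ Λ) (hΛ₁ : Λ ≤ 1) (hyw : y ≤ w + 1) (hwy : w ≤ y)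
    (hwx : w ≤ x + (h + 1) * (z + 1) + 1) (hnw : n ≤ w + x' + (h + 1) * (z + 1) + h)
    (hx : x < n * (Λ + e)) (hx' : x' < n * (1 - Λ + e)) (hz : z < n * e)
    (hlarge : 2 * h + 4 < (n + 1) * ((h + 2) * e)) :
    |y / (n + 1) - Λ| < 2 * (h + 2) * e := by
  have hzh : (h + 1) * (z + 1) ≤ (h + 1) * (n * e + 1) := by gcongr
  have hn₁ : 0 < n + 1 := by positivity
  rw [abs_lt, lt_sub_iff_add_lt, lt_div_iff₀ hn₁, sub_lt_iff_lt_add, div_lt_iff₀ hn₁]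
  constructor <;> nlinarith

theorem tendsto_div_zero_of_le_mul_pow {a b : ℕ → ℝ} {g q r C c : ℝ} (hg : 0 < g) (hq : 0 < q)
    (hqr : q < r) (hc : 0 < c) (ha : ∀ n, 0 ≤ a n) (hab : ∀ᶠ n in atTop, a n ≤ C * (g * q) ^ n)
    (hb : ∀ n, c * (g * r) ^ n ≤ b n) : Tendsto (fun n => a n / b n) atTop (nhds 0) := by
  have hr : 0 < r := hq.trans hqr
  have hb₀ (n : ℕ) : 0 < c * (g * r) ^ n := by positivity
  have hlim : Tendsto (fun n : ℕ => C / c * (q / r) ^ n) atTop (nhds 0) := by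
    simpa only [mul_zero] using (tendsto_pow_atTop_nhds_zero_of_lt_one (div_pos hq hr).le
      ((div_lt_one hr).2 hqr)).const_mul (C / c)
  refine squeeze_zero' (Eventually.of_forall fun n => div_nonneg (ha n) ((hb₀ n).le.trans (hb n)))
    (hab.mono fun n hn => ?_) hlim
  calc a n / b n ≤ C * (g * q) ^ n / (c * (g * r) ^ n) :=
        div_le_div₀ ((ha n).trans hn) hn (hb₀ n) (hb n)
    _ = C / c * (q / r) ^ n := by
        rw [mul_pow, mul_pow, div_pow]
        field_simp

namespace GeneratingTree

variable {s : GrowthScheme} {F : ∀ n, Perm (Fin n) → Prop} (T : GeneratingTree s F) {h : ℕ}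
  (π : Perm (Fin h))

theorem isAtypical_code {n : ℕ} {σ : Perm (Fin (n + 1))} (hσ : F (n + 1) σ) {e : ℝ} (he : 0 < e)
    (hlarge : 2 * h + 4 < (n + 1) * ((h + 2) * e))
    (hdev : 2 * (h + 2) * e ≤ |(cOcc π σ : ℝ) / (n + 1 : ℕ) -
      (wordLaw s.letterLaw (h + 1)).real (s.patternEvent (patternLT π) h)|) :
    s.IsAtypical (h + 1) (2 * h + 20) 2 (s.patternEvent (patternLT π) h) e (T.code σ) := by
  by_contra hcon
  simp only [LabelWalk.IsAtypical, not_or, not_le, T.length_code,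
    probReal_compl_eq_one_sub (MeasurableSet.of_discrete)] at hcon
  obtain ⟨hevent, hcompl, hlow⟩ := hcon
  have hlength := s.length_le_occCount_add (patternLT π) h 2 (T.code σ)
  rw [T.length_code] at hlength
  refine absurd hdev (not_le.2 ?_)
  push_cast
  exact abs_div_sub_lt (w := s.occCount (patternLT π) h 2 (T.code σ)) (Nat.cast_nonneg h)
    (Nat.cast_nonneg n) he.le measureReal_nonneg measureReal_le_one
    (by exact_mod_cast T.cOcc_le_occCount_add_one π hσ)
    (by exact_mod_cast T.occCount_le_cOcc π hσ)
    (by exact_mod_cast s.occCount_le (patternLT π) h 2 (T.code σ))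
    (by exact_mod_cast hlength) hevent hcompl hlow hlarge

include T

theorem exists_card_deviation_le {ε : ℝ} (hε : 0 < ε) : ∃ q C : ℝ, 0 < q ∧ q < 1 ∧
    ∀ᶠ n : ℕ in atTop,
      (((Finset.univ.filter fun σ : Perm (Fin (n + 2)) => F (n + 2) σ).filter fun σ =>
        ε ≤ |(cOcc π σ : ℝ) / (n + 2 : ℕ) -
          (wordLaw s.letterLaw (h + 1)).real (s.patternEvent (patternLT π) h)|).card : ℝ) ≤
        C * (s.growthRate * q) ^ n := by
  set e := ε / (2 * (h + 2)) with he
  have he₀ : 0 < e := by positivity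
  obtain ⟨q, C, hq, hq', hcard⟩ := s.exists_card_isAtypical_le h.succ_pos (2 * h + 20) 2
    (s.patternEvent (patternLT π) h) he₀
  refine ⟨q, C * (s.growthRate * q), hq, hq', ?_⟩
  obtain ⟨N, hN⟩ := exists_nat_gt ((2 * h + 4) / ((h + 2) * e))
  filter_upwards [eventually_ge_atTop N] with n hn
  have hlarge : (2 * h + 4 : ℝ) < ((n + 1 : ℕ) + 1) * ((h + 2) * e) := by
    refine (div_lt_iff₀ (by positivity)).1 (hN.trans_le ?_)
    exact_mod_cast hn.trans (by omega)
  rw [mul_assoc, ← pow_succ', ← Finset.card_image_of_injOn (f := T.code)]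
  · refine hcard (n + 1) _ fun l hl => ?_
    obtain ⟨σ, hσ, rfl⟩ := Finset.mem_image.1 hl
    rw [Finset.mem_filter, Finset.mem_filter] at hσ
    refine ⟨T.length_code σ, T.valid_code hσ.1.2, T.isAtypical_code π hσ.1.2 he₀ hlarge ?_⟩
    rw [he, mul_div_cancel₀ _ (by positivity)]
    exact hσ.2
  · refine T.code_injOn.mono fun σ hσ => ?_
    exact (Finset.mem_filter.1 (Finset.mem_filter.1 hσ).1).2

theorem hasLocalLimit : HasLocalLimit F := by
  refine ⟨fun h π => (wordLaw s.letterLaw (h + 1)).real (s.patternEvent (patternLT π) h),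
    fun h π => ⟨measureReal_nonneg, measureReal_le_one⟩, fun h π ε hε => ?_⟩
  obtain ⟨q, C, hq, hq', hdev⟩ := T.exists_card_deviation_le π hε
  obtain ⟨c, hc, hcard⟩ := s.exists_mul_pow_le_card_validWords
    (s.minLabel_le_three : s.minLabel ≤ 2 + 1) (δ := (1 - q) / 2) (by linarith) (by linarith)
  rw [← tendsto_add_atTop_iff_nat 2]
  refine tendsto_div_zero_of_le_mul_pow s.growthRate_pos hq
    (by linarith : q < 1 - (1 - q) / 2) hc (fun n => Nat.cast_nonneg _) hdev fun n => ?_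
  rw [T.card_filter_eq_card_validWords]
  exact hcard n

end GeneratingTree

end Limit

section Walks

section Geometric

variable {x : ℝ} (A : ℝ) (hx₀ : 0 < x) (hx₁ : x < 1)
include hx₀ hx₁

theorem hasSum_mul_geometric : HasSum (fun a : ℕ => A * x ^ a) (A / (1 - x)) :=
  (hasSum_geometric_of_lt_one hx₀.le hx₁).mul_left A

theorem hasSum_mul_geometric_mul_coe :
    HasSum (fun a : ℕ => A * x ^ a * (a : ℝ)) (A * (x / (1 - x) ^ 2)) :=
  ((hasSum_coe_mul_geometric_of_norm_lt_one
    (by rwa [Real.norm_of_nonneg hx₀.le])).mul_left A).congr_fun fun a => by ring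

theorem summable_mul_geometric_mul_sq : Summable fun a : ℕ => A * x ^ a * (a : ℝ) ^ 2 :=
  ((summable_pow_mul_geometric_of_norm_lt_one 2
    (by rwa [Real.norm_of_nonneg hx₀.le])).mul_left A).congr fun a => by ring

end Geometric

/-- The labels of the generating trees counted by the Catalan numbers. -/
noncomputable def catalanWalk : LabelWalk where
  loss a := a
  minLabel := 2
  ratio := 1 / 2
  scale := 1 / 2
  loss_zero := rfl
  ratio_pos := by norm_num
  ratio_lt_one := by norm_num
  scale_pos := by norm_num
  hasSum_weight := by
    convert hasSum_mul_geometric (x := 1 / 2) (1 / 2) (by norm_num) (by norm_num) using 1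
    norm_num
  hasSum_weight_mul_loss := by
    convert hasSum_mul_geometric_mul_coe (x := 1 / 2) (1 / 2) (by norm_num) (by norm_num) using 1
    norm_num
  summable_weight_mul_loss_sq := summable_mul_geometric_mul_sq _ (by norm_num) (by norm_num)

theorem two_sub_sqrt_two_pos : 0 < 2 - √2 :=
  sub_pos.2 (Real.sqrt_lt' (by norm_num) |>.2 (by norm_num))

theorem two_sub_sqrt_two_lt_one : 2 - √2 < 1 := by
  linarith [Real.one_lt_sqrt_two]

/-- The labels of the generating trees counted by the Schröder numbers. The letters `0` and `1`
both lose nothing. -/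
noncomputable def schroderWalk : LabelWalk where
  loss a := a - 1
  minLabel := 3
  ratio := 2 - √2
  scale := 1 - √2 / 2
  loss_zero := rfl
  ratio_pos := two_sub_sqrt_two_pos
  ratio_lt_one := two_sub_sqrt_two_lt_one
  scale_pos := by linarith [two_sub_sqrt_two_pos]
  hasSum_weight := by
    have h := hasSum_mul_geometric (1 - √2 / 2) two_sub_sqrt_two_pos two_sub_sqrt_two_lt_one
    convert HasSum.zero_add (f := fun a => (1 - √2 / 2) * (2 - √2) ^ (a - 1)) h using 1
    have hne : 1 - (2 - √2) ≠ 0 := (sub_pos.2 two_sub_sqrt_two_lt_one).ne'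
    field_simp
    simp only [zero_tsub, pow_zero, one_mul]
    nlinarith [Real.sq_sqrt (show (0 : ℝ) ≤ 2 by norm_num)]
  hasSum_weight_mul_loss := by
    have h := hasSum_mul_geometric_mul_coe (1 - √2 / 2) two_sub_sqrt_two_pos
      two_sub_sqrt_two_lt_one
    convert HasSum.zero_add
      (f := fun a => (1 - √2 / 2) * (2 - √2) ^ (a - 1) * ((a - 1 : ℕ) : ℝ)) h using 1
    have hne : 1 - (2 - √2) ≠ 0 := (sub_pos.2 two_sub_sqrt_two_lt_one).ne'
    field_simp
    simp only [zero_tsub, pow_zero, CharP.cast_eq_zero, mul_zero, zero_mul, zero_add]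
    nlinarith [Real.sq_sqrt (show (0 : ℝ) ≤ 2 by norm_num)]
  summable_weight_mul_loss_sq := (summable_nat_add_iff 1).1
    (summable_mul_geometric_mul_sq _ two_sub_sqrt_two_pos two_sub_sqrt_two_lt_one)

/-- The labels of the generating trees counted by the Motzkin numbers. The loss `1`, that is,
the increment `0`, never occurs. -/
noncomputable def motzkinWalk : LabelWalk where
  loss a := if a = 0 then 0 else a + 1
  minLabel := 2
  ratio := 1 / 2
  scale := 2 / 3
  loss_zero := rfl
  ratio_pos := by norm_num
  ratio_lt_one := by norm_num
  scale_pos := by norm_num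
  hasSum_weight := by
    have h := hasSum_mul_geometric (x := 1 / 2) (1 / 6) (by norm_num) (by norm_num)
    convert HasSum.zero_add (f := fun a => (2 / 3 : ℝ) * (1 / 2) ^ (if a = 0 then 0 else a + 1))
      (h.congr_fun fun a => ?_) using 1
    · norm_num
    · rw [if_neg a.succ_ne_zero]
      ring
  hasSum_weight_mul_loss := by
    have h := (hasSum_mul_geometric_mul_coe (x := 1 / 2) (1 / 6) (by norm_num) (by norm_num)).add
      (hasSum_mul_geometric (x := 1 / 2) (1 / 3) (by norm_num) (by norm_num))
    convert HasSum.zero_add (f := fun a => (2 / 3 : ℝ) * (1 / 2) ^ (if a = 0 then 0 else a + 1) *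
      ((if a = 0 then 0 else a + 1 : ℕ) : ℝ)) (h.congr_fun fun a => ?_) using 1
    · norm_num
    · rw [if_neg a.succ_ne_zero]
      push_cast
      ring
  summable_weight_mul_loss_sq := by
    have h := (summable_nat_add_iff 2).2
      (summable_mul_geometric_mul_sq (x := 1 / 2) (2 / 3) (by norm_num) (by norm_num))
    refine (summable_nat_add_iff 1).1 (h.congr fun a => ?_)
    rw [if_neg a.succ_ne_zero]

/-- The labels of a generating tree in which every loss is even. -/
noncomputable def evenLossWalk : LabelWalk where
  loss a := 2 * a
  minLabel := 2
  ratio := √(1 / 3)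
  scale := 2 / 3
  loss_zero := rfl
  ratio_pos := by positivity
  ratio_lt_one := by
    rw [Real.sqrt_lt' one_pos]
    norm_num
  scale_pos := by norm_num
  hasSum_weight := by
    simp only [pow_mul, Real.sq_sqrt (show (0 : ℝ) ≤ 1 / 3 by norm_num)]
    convert hasSum_mul_geometric (x := 1 / 3) (2 / 3) (by norm_num) (by norm_num) using 1
    norm_num
  hasSum_weight_mul_loss := by
    simp only [pow_mul, Real.sq_sqrt (show (0 : ℝ) ≤ 1 / 3 by norm_num)]
    convert hasSum_mul_geometric_mul_coe (x := 1 / 3) (4 / 3) (by norm_num) (by norm_num) using 1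
    · ext a
      push_cast
      ring
    · norm_num
  summable_weight_mul_loss_sq := by
    simp only [pow_mul, Real.sq_sqrt (show (0 : ℝ) ≤ 1 / 3 by norm_num)]
    refine (summable_mul_geometric_mul_sq (x := 1 / 3) (8 / 3) (by norm_num)
      (by norm_num)).congr fun a => ?_
    push_cast
    ring

end Walks

section Schemes

/-- The growth of `Av(123)`: unless the new entry is lowest, the sites above it become inactive. -/
noncomputable def scheme123 : GrowthScheme where
  toLabelWalk := catalanWalk
  Remains _ j i := j = 0 ∨ i ≤ j
  site k a := if a = 0 then 0 else k - a
  rank _ j v := if j = 0 then v else min v (j + 1)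
  two_le_minLabel := by simp [catalanWalk]
  minLabel_le_three := by simp [catalanWalk]
  count_remains _ j v _ := by
    induction v with
    | zero => simp
    | succ v ih =>
      rw [Nat.count_succ, ih]
      split_ifs <;> omega
  site_lt k a := by
    simp only [catalanWalk, LabelWalk.Allowed]
    split_ifs <;> omega
  site_inj k a b := by
    simp only [catalanWalk, LabelWalk.Allowed]
    split_ifs <;> omega
  rank_site k a := by
    simp only [catalanWalk, LabelWalk.Allowed, LabelWalk.next]
    split_ifs <;> omega
  coupled_new k a := by
    simp only [catalanWalk, LabelWalk.next, Coupled]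
    split_ifs <;> omega
  le_site_iff t k a g g' := by
    simp only [catalanWalk, LabelWalk.next, Coupled]
    split_ifs <;> omega
  coupled_old t k a g g' := by
    simp only [catalanWalk, LabelWalk.next, Coupled]
    split_ifs <;> omega

/-- The growth of `Av(132)`: only the lowest site and the sites above the new entry stay active. -/
noncomputable def scheme132 : GrowthScheme where
  toLabelWalk := catalanWalk
  Remains _ j i := i = 0 ∨ j + 1 ≤ i
  site _ a := a
  rank _ j v := min v 1 + (v - (j + 1))
  two_le_minLabel := by simp [catalanWalk]
  minLabel_le_three := by simp [catalanWalk]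
  count_remains _ j v _ := by
    induction v with
    | zero => simp
    | succ v ih =>
      rw [Nat.count_succ, ih]
      split_ifs <;> omega
  site_lt k a := by
    simp only [catalanWalk, LabelWalk.Allowed]
    omega
  site_inj k a b := by
    simp only [catalanWalk, LabelWalk.Allowed]
    omega
  rank_site k a := by
    simp only [catalanWalk, LabelWalk.Allowed, LabelWalk.next]
    omega
  coupled_new k a := by
    simp only [catalanWalk, LabelWalk.next, Coupled, true_and]
    omega
  le_site_iff t k a g g' := by
    simp only [catalanWalk, LabelWalk.next, Coupled]
    omega
  coupled_old t k a g g' := by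
    simp only [catalanWalk, LabelWalk.next, Coupled]
    split_ifs <;> omega

/-- The growth of `Av(1423, 4123)`: unless the new entry is lowest, only the sites below it and the
highest site stay active. -/
noncomputable def scheme1423 : GrowthScheme where
  toLabelWalk := schroderWalk
  Remains k j i := j = 0 ∨ i ≤ j ∨ i = k
  site k a := if a = 0 then 0 else k - a
  rank k j v := if j = 0 then v else min v (j + 1) + if k < v then 1 else 0
  two_le_minLabel := by simp [schroderWalk]
  minLabel_le_three := by simp [schroderWalk]
  count_remains k j v hj := by
    induction v with
    | zero => simp
    | succ v ih =>
      rw [Nat.count_succ, ih]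
      split_ifs <;> omega
  site_lt k a := by
    simp only [schroderWalk, LabelWalk.Allowed]
    split_ifs <;> omega
  site_inj k a b := by
    simp only [schroderWalk, LabelWalk.Allowed]
    split_ifs <;> omega
  rank_site k a := by
    simp only [schroderWalk, LabelWalk.Allowed, LabelWalk.next]
    split_ifs <;> omega
  coupled_new k a := by
    simp only [schroderWalk, LabelWalk.next, Coupled]
    split_ifs <;> omega
  le_site_iff t k a g g' := by
    simp only [schroderWalk, LabelWalk.next, Coupled]
    split_ifs <;> omega
  coupled_old t k a g g' := by
    simp only [schroderWalk, LabelWalk.next, Coupled]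
    split_ifs <;> omega

/-- The growth of `Av(1234, 2134)`: unless the new entry uses one of the two lowest sites, the sites
above it become inactive. -/
noncomputable def scheme1234 : GrowthScheme where
  toLabelWalk := schroderWalk
  Remains _ j i := j ≤ 1 ∨ i ≤ j
  site k a := if a ≤ 1 then a else k + 1 - a
  rank _ j v := if j ≤ 1 then v else min v (j + 1)
  two_le_minLabel := by simp [schroderWalk]
  minLabel_le_three := by simp [schroderWalk]
  count_remains _ j v _ := by
    induction v with
    | zero => simp
    | succ v ih =>
      rw [Nat.count_succ, ih]
      split_ifs <;> omega
  site_lt k a := by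
    simp only [schroderWalk, LabelWalk.Allowed]
    split_ifs <;> omega
  site_inj k a b := by
    simp only [schroderWalk, LabelWalk.Allowed]
    split_ifs <;> omega
  rank_site k a := by
    simp only [schroderWalk, LabelWalk.Allowed, LabelWalk.next]
    split_ifs <;> omega
  coupled_new k a := by
    simp only [schroderWalk, LabelWalk.next, Coupled]
    split_ifs <;> omega
  le_site_iff t k a g g' := by
    simp only [schroderWalk, LabelWalk.next, Coupled]
    split_ifs <;> omega
  coupled_old t k a g g' := by
    simp only [schroderWalk, LabelWalk.next, Coupled]
    split_ifs <;> omega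

/-- The growth of `Av(1324, 3124)`: unless the new entry is lowest, only the sites below it and the
first one above it stay active. -/
noncomputable def scheme1324 : GrowthScheme where
  toLabelWalk := schroderWalk
  Remains _ j i := j = 0 ∨ i ≤ j + 1
  site k a := if a = 0 then 0 else k - a
  rank _ j v := if j = 0 then v else min v (j + 2)
  two_le_minLabel := by simp [schroderWalk]
  minLabel_le_three := by simp [schroderWalk]
  count_remains _ j v _ := by
    induction v with
    | zero => simp
    | succ v ih =>
      rw [Nat.count_succ, ih]
      split_ifs <;> omega
  site_lt k a := by
    simp only [schroderWalk, LabelWalk.Allowed]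
    split_ifs <;> omega
  site_inj k a b := by
    simp only [schroderWalk, LabelWalk.Allowed]
    split_ifs <;> omega
  rank_site k a := by
    simp only [schroderWalk, LabelWalk.Allowed, LabelWalk.next]
    split_ifs <;> omega
  coupled_new k a := by
    simp only [schroderWalk, LabelWalk.next, Coupled]
    split_ifs <;> omega
  le_site_iff t k a g g' := by
    simp only [schroderWalk, LabelWalk.next, Coupled]
    split_ifs <;> omega
  coupled_old t k a g g' := by
    simp only [schroderWalk, LabelWalk.next, Coupled]
    split_ifs <;> omega

/-- The growth of `Av(2314, 3214)`: only the sites below the new entry and the first two above it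
stay active. -/
noncomputable def scheme2314 : GrowthScheme where
  toLabelWalk := schroderWalk
  Remains _ j i := i ≤ j + 2
  site k a := k - 1 - a
  rank _ j v := min v (j + 3)
  two_le_minLabel := by simp [schroderWalk]
  minLabel_le_three := by simp [schroderWalk]
  count_remains _ j v _ := by
    induction v with
    | zero => simp
    | succ v ih =>
      rw [Nat.count_succ, ih]
      split_ifs <;> omega
  site_lt k a := by
    simp only [schroderWalk, LabelWalk.Allowed]
    omega
  site_inj k a b := by
    simp only [schroderWalk, LabelWalk.Allowed]
    omega
  rank_site k a := by
    simp only [schroderWalk, LabelWalk.Allowed, LabelWalk.next]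
    omega
  coupled_new k a := by
    simp only [schroderWalk, LabelWalk.next, Coupled]
    omega
  le_site_iff t k a g g' := by
    simp only [schroderWalk, LabelWalk.next, Coupled]
    omega
  coupled_old t k a g g' := by
    simp only [schroderWalk, LabelWalk.next, Coupled]
    split_ifs <;> omega

/-- The growth of `Av(2413, 4213)`: only the sites below the new entry, the first one above it and
the highest one stay active. -/
noncomputable def scheme2413 : GrowthScheme where
  toLabelWalk := schroderWalk
  Remains k j i := i ≤ j + 1 ∨ i = k
  site k a := k - 1 - a
  rank k j v := min v (j + 2) + if k < v ∧ j + 1 < k then 1 else 0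
  two_le_minLabel := by simp [schroderWalk]
  minLabel_le_three := by simp [schroderWalk]
  count_remains k j v _ := by
    induction v with
    | zero => simp
    | succ v ih =>
      rw [Nat.count_succ, ih]
      split_ifs <;> omega
  site_lt k a := by
    simp only [schroderWalk, LabelWalk.Allowed]
    omega
  site_inj k a b := by
    simp only [schroderWalk, LabelWalk.Allowed]
    omega
  rank_site k a := by
    simp only [schroderWalk, LabelWalk.Allowed, LabelWalk.next]
    split_ifs <;> omega
  coupled_new k a := by
    simp only [schroderWalk, LabelWalk.next, Coupled]
    split_ifs <;> omega
  le_site_iff t k a g g' := by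
    simp only [schroderWalk, LabelWalk.next, Coupled]
    omega
  coupled_old t k a g g' := by
    simp only [schroderWalk, LabelWalk.next, Coupled]
    split_ifs <;> omega

/-- The growth of `Av(3412, 4312)`: only the sites below the new entry and the two highest ones stay
active. -/
noncomputable def scheme3412 : GrowthScheme where
  toLabelWalk := schroderWalk
  Remains k j i := i ≤ j ∨ k ≤ i + 1
  site k a := k - 1 - a
  rank k j v := min v (j + 1) + (v - max (j + 1) (k - 1))
  two_le_minLabel := by simp [schroderWalk]
  minLabel_le_three := by simp [schroderWalk]
  count_remains k j v _ := by
    induction v with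
    | zero => simp
    | succ v ih =>
      rw [Nat.count_succ, ih]
      split_ifs <;> omega
  site_lt k a := by
    simp only [schroderWalk, LabelWalk.Allowed]
    omega
  site_inj k a b := by
    simp only [schroderWalk, LabelWalk.Allowed]
    omega
  rank_site k a := by
    simp only [schroderWalk, LabelWalk.Allowed, LabelWalk.next]
    omega
  coupled_new k a := by
    simp only [schroderWalk, LabelWalk.next, Coupled]
    omega
  le_site_iff t k a g g' := by
    simp only [schroderWalk, LabelWalk.next, Coupled]
    omega
  coupled_old t k a g g' := by
    simp only [schroderWalk, LabelWalk.next, Coupled]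
    split_ifs <;> omega

/-- The growth of `FamAPred`: the second highest site is forbidden, and only the sites below the new
entry and the first one above it stay active. -/
noncomputable def schemeA : GrowthScheme where
  toLabelWalk := motzkinWalk
  Remains _ j i := i ≤ j + 1
  site k a := if a = 0 then k - 1 else k - 2 - a
  rank _ j v := min v (j + 2)
  two_le_minLabel := by simp [motzkinWalk]
  minLabel_le_three := by simp [motzkinWalk]
  count_remains _ j v _ := by
    induction v with
    | zero => simp
    | succ v ih =>
      rw [Nat.count_succ, ih]
      split_ifs <;> omega
  site_lt k a := by
    simp only [motzkinWalk, LabelWalk.Allowed]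
    split_ifs <;> omega
  site_inj k a b := by
    simp only [motzkinWalk, LabelWalk.Allowed]
    split_ifs <;> omega
  rank_site k a := by
    simp only [motzkinWalk, LabelWalk.Allowed, LabelWalk.next]
    split_ifs <;> omega
  coupled_new k a := by
    simp only [motzkinWalk, LabelWalk.next, Coupled]
    split_ifs <;> omega
  le_site_iff t k a g g' := by
    simp only [motzkinWalk, LabelWalk.next, Coupled]
    split_ifs <;> omega
  coupled_old t k a g g' := by
    simp only [motzkinWalk, LabelWalk.next, Coupled]
    split_ifs <;> omega

/-- The growth of `FamBPred`: every other site is allowed, starting with the highest one, and only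
the sites below the new entry and the first one above it stay active. -/
noncomputable def schemeB : GrowthScheme where
  toLabelWalk := evenLossWalk
  Remains _ j i := i ≤ j + 1
  site k a := k - 1 - 2 * a
  rank _ j v := min v (j + 2)
  two_le_minLabel := by simp [evenLossWalk]
  minLabel_le_three := by simp [evenLossWalk]
  count_remains _ j v _ := by
    induction v with
    | zero => simp
    | succ v ih =>
      rw [Nat.count_succ, ih]
      split_ifs <;> omega
  site_lt k a := by
    simp only [evenLossWalk, LabelWalk.Allowed]
    omega
  site_inj k a b := by
    simp only [evenLossWalk, LabelWalk.Allowed]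
    omega
  rank_site k a := by
    simp only [evenLossWalk, LabelWalk.Allowed, LabelWalk.next]
    omega
  coupled_new k a := by
    simp only [evenLossWalk, LabelWalk.next, Coupled]
    omega
  le_site_iff t k a g g' := by
    simp only [evenLossWalk, LabelWalk.next, Coupled]
    omega
  coupled_old t k a g g' := by
    simp only [evenLossWalk, LabelWalk.next, Coupled]
    split_ifs <;> omega

end Schemes

section Relations

/-- The truth of `C p q r t` depends only on the relative order of the four values. -/
def OrderInvariant (C : ℕ → ℕ → ℕ → ℕ → Prop) : Prop :=
  ∀ (g : ℕ → ℕ) (S : Set ℕ), StrictMonoOn g S →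
    ∀ p ∈ S, ∀ q ∈ S, ∀ r ∈ S, ∀ t ∈ S, (C (g p) (g q) (g r) (g t) ↔ C p q r t)

/-- Some values `p` and `q` of `σ`, in any order or equal, followed by `r` and then by `t`, satisfy
`C p q r t`. -/
def Contains (C : ℕ → ℕ → ℕ → ℕ → Prop) {n : ℕ} (σ : Perm (Fin n)) : Prop :=
  ∃ p q r t, p < r ∧ q < r ∧ r < t ∧ C (σ p) (σ q) (σ r) (σ t)

/-- Appending the last value `m` to `σ` does not let the new entry play the last role in `C`. Values
`v` and sites `m` are compared as `2 * v + 1` and `2 * m`: the site `m` lies just below the value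
`m`. -/
def ActiveSite (C : ℕ → ℕ → ℕ → ℕ → Prop) {n : ℕ} (σ : Perm (Fin n)) (m : ℕ) : Prop :=
  ¬ ∃ p q r, p < r ∧ q < r ∧ C (2 * σ p + 1) (2 * σ q + 1) (2 * σ r + 1) (2 * m)

/-- An entry of value `m` at the end of a permutation of `{0, …, n}` plays, together with two other
values, the third role in `C` for the site `x`. -/
def Deactivates (C : ℕ → ℕ → ℕ → ℕ → Prop) (n m x : ℕ) : Prop :=
  ∃ p q, p ≤ n ∧ q ≤ n ∧ p ≠ m ∧ q ≠ m ∧ C (2 * p + 1) (2 * q + 1) (2 * m + 1) (2 * x)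

variable {C : ℕ → ℕ → ℕ → ℕ → Prop}

theorem exists_shiftAbove_eq_iff {n : ℕ} (σ : Perm (Fin n)) (m : Fin (n + 1)) {v : ℕ} :
    (∃ i, shiftAbove m (σ i) = v) ↔ v ≤ n ∧ v ≠ m := by
  have hm := m.isLt
  constructor
  · rintro ⟨i, rfl⟩
    simp only [shiftAbove]
    split_ifs <;> omega
  · rintro ⟨hv, hvm⟩
    obtain ⟨i, hi⟩ := σ.surjective ⟨if v < m then v else v - 1, by split_ifs <;> omega⟩
    refine ⟨i, ?_⟩
    simp only [hi, shiftAbove]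
    split_ifs <;> omega

theorem deactivates_iff {n : ℕ} (σ : Perm (Fin n)) (m : Fin (n + 1)) (x : ℕ) :
    Deactivates C n m x ↔ ∃ i j, C (2 * shiftAbove m (σ i) + 1) (2 * shiftAbove m (σ j) + 1)
      (2 * m + 1) (2 * x) := by
  constructor
  · rintro ⟨p, q, hp, hq, hpm, hqm, h⟩
    obtain ⟨i, rfl⟩ := (exists_shiftAbove_eq_iff σ m).2 ⟨hp, hpm⟩
    obtain ⟨j, rfl⟩ := (exists_shiftAbove_eq_iff σ m).2 ⟨hq, hqm⟩
    exact ⟨i, j, h⟩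
  · rintro ⟨i, j, h⟩
    obtain ⟨hp, hpm⟩ := (exists_shiftAbove_eq_iff σ m).1 ⟨i, rfl⟩
    obtain ⟨hq, hqm⟩ := (exists_shiftAbove_eq_iff σ m).1 ⟨j, rfl⟩
    exact ⟨_, _, hp, hq, hpm, hqm, h⟩

namespace OrderInvariant

variable {n : ℕ} (hC : OrderInvariant C)
include hC

theorem shiftAbove_iff (m p q r t : ℕ) :
    C (shiftAbove m p) (shiftAbove m q) (shiftAbove m r) (shiftAbove m t) ↔ C p q r t := by
  refine hC (shiftAbove m) Set.univ (fun x _ y _ hxy => ?_) p trivial q trivial r trivial t trivial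
  simp only [shiftAbove]
  split_ifs <;> omega

theorem shiftAbove_last_iff (m p q r : ℕ) :
    C (shiftAbove m p) (shiftAbove m q) (shiftAbove m r) m ↔
      C (2 * p + 1) (2 * q + 1) (2 * r + 1) (2 * m) := by
  let g (w : ℕ) : ℕ := if w < 2 * m then w / 2 else (w + 1) / 2
  have hvalue (v : ℕ) : g (2 * v + 1) = shiftAbove m v := by
    simp only [g, shiftAbove]
    split_ifs <;> omega
  have hsite : g (2 * m) = m := by
    simp only [g]
    split_ifs <;> omega
  have hg : StrictMonoOn g {w | w = 2 * m ∨ w % 2 = 1} := fun w hw w' hw' hlt => by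
    simp only [Set.mem_ofPred_eq] at hw hw'
    simp only [g]
    split_ifs <;> omega
  rw [← hvalue, ← hvalue, ← hvalue, ← hC g _ hg (2 * p + 1) (by simp)
    (2 * q + 1) (by simp) (2 * r + 1) (by simp) (2 * m) (by simp), hsite]

theorem shiftAbove_site_iff (m p q r x : ℕ) :
    C (2 * shiftAbove m p + 1) (2 * shiftAbove m q + 1) (2 * shiftAbove m r + 1) (2 * x) ↔
      C (2 * p + 1) (2 * q + 1) (2 * r + 1) (2 * siteBefore m x) := by
  let g (w : ℕ) : ℕ := if w = 2 * siteBefore m x then 2 * x else 2 * shiftAbove m (w / 2) + 1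
  have hvalue (v : ℕ) : g (2 * v + 1) = 2 * shiftAbove m v + 1 := by
    simp only [g]
    rw [if_neg (by omega), show (2 * v + 1) / 2 = v by omega]
  have hg : StrictMonoOn g {w | w = 2 * siteBefore m x ∨ w % 2 = 1} := fun w hw w' hw' hlt => by
    simp only [Set.mem_ofPred_eq, siteBefore] at hw hw'
    simp only [g, siteBefore, shiftAbove]
    split_ifs at * <;> omega
  have hsite : g (2 * siteBefore m x) = 2 * x := if_pos rfl
  rw [← hvalue, ← hvalue, ← hvalue, ← hC g _ hg (2 * p + 1) (by simp)
    (2 * q + 1) (by simp) (2 * r + 1) (by simp) (2 * siteBefore m x) (by simp), hsite]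

theorem contains_appendLast_iff (σ : Perm (Fin n)) (m : Fin (n + 1)) :
    Contains C (appendLast σ m) ↔ Contains C σ ∨ ¬ ActiveSite C σ m := by
  simp only [Contains, ActiveSite, not_not, Fin.exists_fin_succ', coe_appendLast_castSucc,
    appendLast_last, hC.shiftAbove_iff, hC.shiftAbove_last_iff, Fin.castSucc_lt_castSucc_iff,
    Fin.castSucc_lt_last, Fin.not_lt.2 (Fin.le_last _), false_and, and_false, exists_false,
    or_false, true_and, exists_or]

theorem activeSite_appendLast_iff (σ : Perm (Fin n)) (m : Fin (n + 1)) (x : ℕ) :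
    ActiveSite C (appendLast σ m) x ↔
      ActiveSite C σ (siteBefore m x) ∧ ¬ Deactivates C n m x := by
  simp only [ActiveSite, deactivates_iff σ, Fin.exists_fin_succ', coe_appendLast_castSucc,
    appendLast_last, hC.shiftAbove_site_iff, Fin.castSucc_lt_castSucc_iff, Fin.castSucc_lt_last,
    Fin.not_lt.2 (Fin.le_last _), false_and, and_false, exists_false, or_false, true_and,
    exists_or, not_or]

end OrderInvariant

/-- The generating tree of a family whose permutations are extended at some of the active sites of
the relation `C`. -/
def GeneratingTree.ofRelation (s : GrowthScheme) {F : ∀ n, Perm (Fin n) → Prop}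
    (hC : OrderInvariant C) (mem_one : ∀ σ, F 1 σ)
    (mem_of_appendLast : ∀ {n : ℕ} {σ : Perm (Fin (n + 1))} {m : Fin (n + 2)},
      F (n + 2) (appendLast σ m) → F (n + 1) σ)
    (appendLast_mem_iff : ∀ {n : ℕ} {σ : Perm (Fin (n + 1))} (m : Fin (n + 2)), F (n + 1) σ →
      2 ≤ Nat.count (ActiveSite C σ) (n + 2) → (F (n + 2) (appendLast σ m) ↔ ActiveSite C σ m ∧
        ∃ a, s.Allowed (Nat.count (ActiveSite C σ) (n + 2)) a ∧
          s.site (Nat.count (ActiveSite C σ) (n + 2)) a = Nat.count (ActiveSite C σ) m))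
    (not_deactivates_iff : ∀ {n : ℕ} {σ : Perm (Fin (n + 1))} {m x : ℕ}, m ≤ n + 1 → x ≤ n + 2 →
      ActiveSite C σ m → ActiveSite C σ (siteBefore m x) → (¬ Deactivates C (n + 1) m x ↔
        s.Remains (Nat.count (ActiveSite C σ) (n + 2)) (Nat.count (ActiveSite C σ) m)
          (Nat.count (fun y => ActiveSite C σ (siteBefore m y)) x))) :
    GeneratingTree s F where
  Active := ActiveSite C
  mem_one := mem_one
  active_zero _ := fun ⟨p, _, r, hpr, _⟩ => hpr.ne (Subsingleton.elim p r)
  active_one _ := fun ⟨p, _, r, hpr, _⟩ => hpr.ne (Subsingleton.elim p r)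
  mem_of_appendLast := mem_of_appendLast
  appendLast_mem_iff := appendLast_mem_iff
  active_appendLast_iff {_ σ m} hm x hx := by
    rw [hC.activeSite_appendLast_iff]
    exact and_congr_right fun hx' => not_deactivates_iff (Fin.is_le m) hx hm hx'

theorem hasLocalLimit_of_iff_not_contains (s : GrowthScheme) {F : ∀ n, Perm (Fin n) → Prop}
    (hC : OrderInvariant C) (hF : ∀ {n : ℕ} (σ : Perm (Fin n)), F n σ ↔ ¬ Contains C σ)
    (exists_site_eq : ∀ {k j : ℕ}, 2 ≤ k → j < k → ∃ a, s.Allowed k a ∧ s.site k a = j)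
    (not_deactivates_iff : ∀ {n : ℕ} {σ : Perm (Fin (n + 1))} {m x : ℕ}, m ≤ n + 1 → x ≤ n + 2 →
      ActiveSite C σ m → ActiveSite C σ (siteBefore m x) → (¬ Deactivates C (n + 1) m x ↔
        s.Remains (Nat.count (ActiveSite C σ) (n + 2)) (Nat.count (ActiveSite C σ) m)
          (Nat.count (fun y => ActiveSite C σ (siteBefore m y)) x))) :
    HasLocalLimit F := by
  refine (GeneratingTree.ofRelation s hC (fun σ => ?_) (fun h => ?_) (fun {n σ} m hσ hk => ?_)
    not_deactivates_iff).hasLocalLimit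
  · rw [hF]
    exact fun ⟨p, _, r, _, hpr, _⟩ => hpr.ne (Subsingleton.elim p r)
  · rw [hF, hC.contains_appendLast_iff, not_or] at h
    exact (hF _).2 h.1
  · rw [hF, hC.contains_appendLast_iff, not_or, not_not, and_iff_right ((hF σ).1 hσ)]
    exact (and_iff_left_of_imp fun hm => exists_site_eq hk (Nat.count_strict_mono hm m.isLt)).symm

end Relations

section Patterns

/-- The entries of the word `w` are in the relative order of `π`. -/
def HasOrder {k : ℕ} (π : Perm (Fin k)) (w : Fin k → ℕ) : Prop :=
  ∀ a b, w a < w b ↔ π a < π b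

/-- The values `p`, `r`, `t` are in the relative order of `π`. -/
def threeRel (π : Perm (Fin 3)) (p _q r t : ℕ) : Prop := HasOrder π ![p, r, t]

/-- The values `p`, `q`, `r`, `t` are in the relative order of `π`. -/
def fourRel (π : Perm (Fin 4)) (p q r t : ℕ) : Prop := HasOrder π ![p, q, r, t]

theorem HasOrder.map_iff {k : ℕ} {π : Perm (Fin k)} {w : Fin k → ℕ} {g : ℕ → ℕ} {S : Set ℕ}
    (hg : StrictMonoOn g S) (hw : ∀ a, w a ∈ S) : HasOrder π (FinVec.map g w) ↔ HasOrder π w := by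
  rw [FinVec.map_eq]
  exact forall₂_congr fun a b => iff_congr (hg.lt_iff_lt (hw a) (hw b)) Iff.rfl

theorem orderInvariant_threeRel (π : Perm (Fin 3)) : OrderInvariant (threeRel π) :=
  fun _ _ hg p hp _ _ r hr t ht => HasOrder.map_iff hg (w := ![p, r, t])
    (by simp [Fin.forall_fin_succ, hp, hr, ht])

theorem orderInvariant_fourRel (π : Perm (Fin 4)) : OrderInvariant (fourRel π) :=
  fun _ _ hg p hp q hq r hr t ht => HasOrder.map_iff hg (w := ![p, q, r, t])
    (by simp [Fin.forall_fin_succ, hp, hq, hr, ht])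

theorem hasOrder_iff_strictMono {k : ℕ} {π : Perm (Fin k)} {e : Fin k → Fin k}
    (he : ∀ i, π (e i) = i) {w : Fin k → ℕ} : HasOrder π w ↔ StrictMono (w ∘ e) := by
  have he' (a : Fin k) : e (π a) = a := π.injective (he _)
  refine ⟨fun h a b hab => (h _ _).2 (by rwa [he, he]), fun h a b => ?_⟩
  rw [← h.lt_iff_lt, Function.comp_apply, Function.comp_apply, he', he']

theorem strictMono_fin_three_iff {f : Fin 3 → ℕ} : StrictMono f ↔ f 0 < f 1 ∧ f 1 < f 2 := by
  rw [Fin.strictMono_iff_lt_succ, Fin.forall_fin_two]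
  rfl

theorem strictMono_fin_four_iff {f : Fin 4 → ℕ} :
    StrictMono f ↔ f 0 < f 1 ∧ f 1 < f 2 ∧ f 2 < f 3 := by
  rw [Fin.strictMono_iff_lt_succ, Fin.forall_fin_succ, Fin.forall_fin_two]
  rfl

variable {p q r t : ℕ}

theorem threeRel_p123_iff : threeRel p123 p q r t ↔ p < r ∧ r < t :=
  (hasOrder_iff_strictMono (e := ![0, 1, 2]) (by decide)).trans strictMono_fin_three_iff

theorem threeRel_p132_iff : threeRel p132 p q r t ↔ p < t ∧ t < r :=
  (hasOrder_iff_strictMono (e := ![0, 2, 1]) (by decide)).trans strictMono_fin_three_iff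

theorem threeRel_p213_iff : threeRel p213 p q r t ↔ r < p ∧ p < t :=
  (hasOrder_iff_strictMono (e := ![1, 0, 2]) (by decide)).trans strictMono_fin_three_iff

theorem fourRel_p1423_iff : fourRel p1423 p q r t ↔ p < r ∧ r < t ∧ t < q :=
  (hasOrder_iff_strictMono (e := ![0, 2, 3, 1]) (by decide)).trans strictMono_fin_four_iff

theorem fourRel_p1234_iff : fourRel p1234 p q r t ↔ p < q ∧ q < r ∧ r < t :=
  (hasOrder_iff_strictMono (e := ![0, 1, 2, 3]) (by decide)).trans strictMono_fin_four_iff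

theorem fourRel_p1324_iff : fourRel p1324 p q r t ↔ p < r ∧ r < q ∧ q < t :=
  (hasOrder_iff_strictMono (e := ![0, 2, 1, 3]) (by decide)).trans strictMono_fin_four_iff

theorem fourRel_p2314_iff : fourRel p2314 p q r t ↔ r < p ∧ p < q ∧ q < t :=
  (hasOrder_iff_strictMono (e := ![2, 0, 1, 3]) (by decide)).trans strictMono_fin_four_iff

theorem fourRel_p2413_iff : fourRel p2413 p q r t ↔ r < p ∧ p < t ∧ t < q :=
  (hasOrder_iff_strictMono (e := ![2, 0, 3, 1]) (by decide)).trans strictMono_fin_four_iff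

theorem fourRel_p3412_iff : fourRel p3412 p q r t ↔ r < t ∧ t < p ∧ p < q :=
  (hasOrder_iff_strictMono (e := ![2, 3, 0, 1]) (by decide)).trans strictMono_fin_four_iff

theorem isOcc_iff_exists_hasOrder {k n : ℕ} {π : Perm (Fin k)} {σ : Perm (Fin n)} :
    IsOcc π σ ↔ FinVec.Exists fun f : Fin k → Fin n =>
      StrictMono f ∧ HasOrder π (FinVec.map (fun i => (σ i : ℕ)) f) := by
  rw [FinVec.exists_iff]
  simp only [FinVec.map_eq]
  rfl

theorem isOcc_iff_contains_threeRel {n : ℕ} {π : Perm (Fin 3)} {σ : Perm (Fin n)} :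
    IsOcc π σ ↔ Contains (threeRel π) σ := by
  rw [isOcc_iff_exists_hasOrder]
  constructor
  · rintro ⟨p, r, t, hf, hπ⟩
    have hpr : p < r := hf (show (0 : Fin 3) < 1 by decide)
    exact ⟨p, p, r, t, hpr, hpr, hf (show (1 : Fin 3) < 2 by decide), hπ⟩
  · rintro ⟨p, q, r, t, hpr, -, hrt, hπ⟩
    exact ⟨p, r, t, by simp [hpr, hrt], hπ⟩

theorem isOcc_iff_exists_fourRel {n : ℕ} {π : Perm (Fin 4)} {σ : Perm (Fin n)} :
    IsOcc π σ ↔ ∃ p q r t, p < q ∧ q < r ∧ r < t ∧ fourRel π (σ p) (σ q) (σ r) (σ t) := by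
  rw [isOcc_iff_exists_hasOrder]
  constructor
  · rintro ⟨p, q, r, t, hf, hπ⟩
    exact ⟨p, q, r, t, hf (show (0 : Fin 4) < 1 by decide), hf (show (1 : Fin 4) < 2 by decide),
      hf (show (2 : Fin 4) < 3 by decide), hπ⟩
  · rintro ⟨p, q, r, t, hpq, hqr, hrt, hπ⟩
    exact ⟨p, q, r, t, by simp [hpq, hqr, hrt], hπ⟩

theorem fourRel_swap {π π' : Perm (Fin 4)} (hπ : ∀ a, π' (swap 0 1 a) = π a) :
    fourRel π' p q r t ↔ fourRel π q p r t := by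
  have hw : ![q, p, r, t] = ![p, q, r, t] ∘ swap 0 1 :=
    (Matrix.cons_cons_comp_swap_zero_one ..).symm
  rw [fourRel, fourRel, hw]
  refine ((swap 0 1).forall₂_congr (swap 0 1) fun {a b} => ?_).symm
  rw [hπ, hπ, Function.comp_apply, Function.comp_apply]

theorem avPred_singleton_iff {n : ℕ} {π : Perm (Fin 3)} {σ : Perm (Fin n)} :
    AvPred {π} n σ ↔ ¬ Contains (threeRel π) σ := by
  rw [← isOcc_iff_contains_threeRel]
  simp [AvPred]

theorem avPred_pair_iff {n : ℕ} {π π' : Perm (Fin 4)} (hπ : ∀ a, π' (swap 0 1 a) = π a)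
    {σ : Perm (Fin n)} : AvPred {π, π'} n σ ↔ ¬ Contains (fourRel π) σ := by
  have hAv : AvPred {π, π'} n σ ↔ ¬ (IsOcc π σ ∨ IsOcc π' σ) := by simp [AvPred, not_or]
  rw [hAv, not_iff_not, isOcc_iff_exists_fourRel, isOcc_iff_exists_fourRel]
  simp only [fourRel_swap hπ]
  constructor
  · rintro (⟨p, q, r, t, hpq, hqr, hrt, h⟩ | ⟨q, p, r, t, hqp, hpr, hrt, h⟩)
    · exact ⟨p, q, r, t, hpq.trans hqr, hqr, hrt, h⟩
    · exact ⟨p, q, r, t, hpr, hqp.trans hpr, hrt, h⟩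
  · rintro ⟨p, q, r, t, hpr, hqr, hrt, h⟩
    rcases lt_trichotomy p q with hpq | rfl | hqp
    · exact Or.inl ⟨p, q, r, t, hpq, hqr, hrt, h⟩
    · have h01 := (h 0 1).not.1 (lt_irrefl _)
      have h10 := (h 1 0).not.1 (lt_irrefl _)
      exact absurd (π.injective (le_antisymm (not_lt.1 h10) (not_lt.1 h01))) (by decide)
    · exact Or.inr ⟨q, p, r, t, hqp, hpr, hrt, h⟩

end Patterns

section Counting

variable {S : ℕ → Prop}

theorem count_le_count_iff {a b : ℕ} (hb : S b) : Nat.count S a ≤ Nat.count S b ↔ a ≤ b :=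
  ⟨fun h => not_lt.1 fun hlt => (Nat.count_strict_mono hb hlt).not_ge h,
    fun h => Nat.count_monotone S h⟩

theorem count_eq_zero_iff_of_zero {a : ℕ} (h0 : S 0) : Nat.count S a = 0 ↔ a = 0 := by
  simpa only [Nat.count_zero, Nat.le_zero] using count_le_count_iff (a := a) h0

variable {m n x : ℕ} (hm : S m)
include hm

theorem count_siteBefore_le_iff :
    Nat.count (fun y => S (siteBefore m y)) x ≤ Nat.count S m ↔ x ≤ m := by
  rw [← count_siteBefore_of_le S le_rfl]
  exact count_le_count_iff (by rwa [siteBefore_self])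

theorem count_siteBefore_le_succ_iff :
    Nat.count (fun y => S (siteBefore m y)) x ≤ Nat.count S m + 1 ↔ x ≤ m + 1 := by
  rw [← count_siteBefore_succ S hm le_rfl]
  exact count_le_count_iff (by rwa [siteBefore_succ le_rfl])

theorem count_siteBefore_add_two :
    Nat.count (fun y => S (siteBefore m y)) (m + 2) = Nat.count S m + 2 := by
  rw [Nat.count_succ, siteBefore_succ le_rfl, if_pos hm, count_siteBefore_succ S hm le_rfl]

theorem count_siteBefore_last (hmn : m ≤ n) (hn : S n) :
    Nat.count (fun y => S (siteBefore m y)) (n + 1) = Nat.count S (n + 1) := by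
  rw [count_siteBefore_succ S hm hmn, Nat.count_succ, if_pos hn]

theorem count_siteBefore_eq_last_iff (hmn : m ≤ n) (hn : S n) (hx : x ≤ n + 1)
    (hSx : S (siteBefore m x)) :
    Nat.count (fun y => S (siteBefore m y)) x = Nat.count S (n + 1) ↔ x = n + 1 := by
  rw [← count_siteBefore_last hm hmn hn]
  exact ⟨fun h => le_antisymm hx
    ((count_le_count_iff (S := fun y => S (siteBefore m y)) hSx).1 h.ge), fun h => h ▸ rfl⟩

end Counting

section PatternFamilies

variable {n m x : ℕ}

theorem not_deactivates_p123_iff :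
    ¬ Deactivates (threeRel p123) n m x ↔ m = 0 ∨ x ≤ m := by
  simp only [Deactivates, threeRel_p123_iff]
  refine ⟨fun h => ?_, fun h ⟨p, q, hpq⟩ => by omega⟩
  by_contra hne
  exact h ⟨0, 0, by omega⟩

theorem not_deactivates_p132_iff :
    ¬ Deactivates (threeRel p132) n m x ↔ x = 0 ∨ m + 1 ≤ x := by
  simp only [Deactivates, threeRel_p132_iff]
  refine ⟨fun h => ?_, fun h ⟨p, q, hpq⟩ => by omega⟩
  by_contra hne
  exact h ⟨0, 0, by omega⟩

theorem not_deactivates_p213_iff (hx : x ≤ n + 1) :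
    ¬ Deactivates (threeRel p213) n m x ↔ x ≤ m + 1 := by
  simp only [Deactivates, threeRel_p213_iff]
  refine ⟨fun h => ?_, fun h ⟨p, q, hpq⟩ => by omega⟩
  by_contra hne
  exact h ⟨m + 1, m + 1, by omega⟩

theorem not_deactivates_p1423_iff (hx : x ≤ n + 1) :
    ¬ Deactivates (fourRel p1423) n m x ↔ m = 0 ∨ x ≤ m ∨ x = n + 1 := by
  simp only [Deactivates, fourRel_p1423_iff]
  refine ⟨fun h => ?_, fun h ⟨p, q, hpq⟩ => by omega⟩
  by_contra hne
  exact h ⟨0, x, by omega⟩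

theorem not_deactivates_p1234_iff (hm : m ≤ n) :
    ¬ Deactivates (fourRel p1234) n m x ↔ m ≤ 1 ∨ x ≤ m := by
  simp only [Deactivates, fourRel_p1234_iff]
  refine ⟨fun h => ?_, fun h ⟨p, q, hpq⟩ => by omega⟩
  by_contra hne
  exact h ⟨0, 1, by omega⟩

theorem not_deactivates_p1324_iff (hx : x ≤ n + 1) :
    ¬ Deactivates (fourRel p1324) n m x ↔ m = 0 ∨ x ≤ m + 1 := by
  simp only [Deactivates, fourRel_p1324_iff]
  refine ⟨fun h => ?_, fun h ⟨p, q, hpq⟩ => by omega⟩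
  by_contra hne
  exact h ⟨0, m + 1, by omega⟩

theorem not_deactivates_p2314_iff (hx : x ≤ n + 1) :
    ¬ Deactivates (fourRel p2314) n m x ↔ x ≤ m + 2 := by
  simp only [Deactivates, fourRel_p2314_iff]
  refine ⟨fun h => ?_, fun h ⟨p, q, hpq⟩ => by omega⟩
  by_contra hne
  exact h ⟨m + 1, m + 2, by omega⟩

theorem not_deactivates_p2413_iff (hx : x ≤ n + 1) :
    ¬ Deactivates (fourRel p2413) n m x ↔ x ≤ m + 1 ∨ x = n + 1 := by
  simp only [Deactivates, fourRel_p2413_iff]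
  refine ⟨fun h => ?_, fun h ⟨p, q, hpq⟩ => by omega⟩
  by_contra hne
  exact h ⟨m + 1, x, by omega⟩

theorem not_deactivates_p3412_iff :
    ¬ Deactivates (fourRel p3412) n m x ↔ x ≤ m ∨ n ≤ x := by
  simp only [Deactivates, fourRel_p3412_iff]
  refine ⟨fun h => ?_, fun h ⟨p, q, hpq⟩ => by omega⟩
  by_contra hne
  exact h ⟨x, x + 1, by omega⟩

theorem hasLocalLimit_av123 : HasLocalLimit (AvPred {p123}) := by
  refine hasLocalLimit_of_iff_not_contains scheme123 (orderInvariant_threeRel _)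
    (fun _ => avPred_singleton_iff) (fun {k j} _ hj => ?_) fun {n σ m x} _ _ hSm _ => ?_
  · simp only [scheme123, catalanWalk, LabelWalk.Allowed]
    exact ⟨if j = 0 then 0 else k - j, by split_ifs <;> omega⟩
  · have hzero : ActiveSite (threeRel p123) σ 0 := fun ⟨p, q, r, _, _, h⟩ => by
      rw [threeRel_p123_iff] at h
      omega
    simp only [scheme123]
    rw [not_deactivates_p123_iff, count_siteBefore_le_iff hSm, count_eq_zero_iff_of_zero hzero]

theorem hasLocalLimit_av132 : HasLocalLimit (AvPred {p132}) := by
  refine hasLocalLimit_of_iff_not_contains scheme132 (orderInvariant_threeRel _)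
    (fun _ => avPred_singleton_iff) (fun {k j} _ hj => ?_) fun {n σ m x} _ _ hSm _ => ?_
  · simp only [scheme132, catalanWalk, LabelWalk.Allowed]
    exact ⟨j, by omega, rfl⟩
  · have hzero : ActiveSite (threeRel p132) σ (siteBefore m 0) := fun ⟨p, q, r, _, _, h⟩ => by
      rw [threeRel_p132_iff, siteBefore, if_pos (Nat.zero_le m)] at h
      omega
    simp only [scheme132]
    rw [not_deactivates_p132_iff, count_eq_zero_iff_of_zero
      (S := fun y => ActiveSite _ σ (siteBefore m y)) hzero, Nat.succ_le_iff,
      Nat.succ_le_iff, ← not_le, ← not_le, count_siteBefore_le_iff hSm]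

theorem hasLocalLimit_av1423 : HasLocalLimit (AvPred {p1423, p4123}) := by
  refine hasLocalLimit_of_iff_not_contains scheme1423 (orderInvariant_fourRel _)
    (fun _ => avPred_pair_iff (by decide)) (fun {k j} _ hj => ?_) fun {n σ m x} hm hx hSm hSx => ?_
  · simp only [scheme1423, schroderWalk, LabelWalk.Allowed]
    exact ⟨if j = 0 then 0 else k - j, by split_ifs <;> omega⟩
  · have hzero : ActiveSite (fourRel p1423) σ 0 := fun ⟨p, q, r, _, _, h⟩ => by
      rw [fourRel_p1423_iff] at h
      omega
    have hlast : ActiveSite (fourRel p1423) σ (n + 1) := fun ⟨p, q, r, _, _, h⟩ => by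
      rw [fourRel_p1423_iff] at h
      omega
    simp only [scheme1423]
    rw [not_deactivates_p1423_iff hx, count_siteBefore_le_iff hSm,
      count_eq_zero_iff_of_zero hzero, count_siteBefore_eq_last_iff hSm hm hlast hx hSx]

theorem hasLocalLimit_av1234 : HasLocalLimit (AvPred {p1234, p2134}) := by
  refine hasLocalLimit_of_iff_not_contains scheme1234 (orderInvariant_fourRel _)
    (fun _ => avPred_pair_iff (by decide)) (fun {k j} hk hj => ?_) fun {n σ m x} hm _ hSm _ => ?_
  · simp only [scheme1234, schroderWalk, LabelWalk.Allowed]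
    exact ⟨if j ≤ 1 then j else k + 1 - j, by split_ifs <;> omega⟩
  · have hlow (v : ℕ) (hv : v ≤ 1) : ActiveSite (fourRel p1234) σ v := fun ⟨p, q, r, _, _, h⟩ => by
      rw [fourRel_p1234_iff] at h
      omega
    have hcount : Nat.count (ActiveSite (fourRel p1234) σ) 1 = 1 := by
      rw [Nat.count_succ, Nat.count_zero, if_pos (hlow 0 zero_le_one)]
    have hone := count_le_count_iff (a := m) (hlow 1 le_rfl)
    rw [hcount] at hone
    simp only [scheme1234]
    rw [not_deactivates_p1234_iff hm, count_siteBefore_le_iff hSm, hone]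

theorem hasLocalLimit_av1324 : HasLocalLimit (AvPred {p1324, p3124}) := by
  refine hasLocalLimit_of_iff_not_contains scheme1324 (orderInvariant_fourRel _)
    (fun _ => avPred_pair_iff (by decide)) (fun {k j} _ hj => ?_) fun {n σ m x} _ hx hSm _ => ?_
  · simp only [scheme1324, schroderWalk, LabelWalk.Allowed]
    exact ⟨if j = 0 then 0 else k - j, by split_ifs <;> omega⟩
  · have hzero : ActiveSite (fourRel p1324) σ 0 := fun ⟨p, q, r, _, _, h⟩ => by
      rw [fourRel_p1324_iff] at h
      omega
    simp only [scheme1324]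
    rw [not_deactivates_p1324_iff hx, count_siteBefore_le_succ_iff hSm,
      count_eq_zero_iff_of_zero hzero]

theorem ActiveSite.p2314_of_le {σ : Perm (Fin n)} {u v : ℕ} (huv : u ≤ v)
    (hv : ActiveSite (fourRel p2314) σ v) : ActiveSite (fourRel p2314) σ u := by
  rintro ⟨p, q, r, hpr, hqr, h⟩
  refine hv ⟨p, q, r, hpr, hqr, ?_⟩
  rw [fourRel_p2314_iff] at h ⊢
  omega

theorem hasLocalLimit_av2314 : HasLocalLimit (AvPred {p2314, p3214}) := by
  refine hasLocalLimit_of_iff_not_contains scheme2314 (orderInvariant_fourRel _)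
    (fun _ => avPred_pair_iff (by decide)) (fun {k j} _ hj => ?_) fun {n σ m x} _ hx hSm hSx => ?_
  · simp only [scheme2314, schroderWalk, LabelWalk.Allowed]
    exact ⟨k - 1 - j, by omega⟩
  · simp only [scheme2314]
    rw [not_deactivates_p2314_iff hx, ← count_siteBefore_add_two hSm]
    rcases le_or_gt x (m + 2) with hle | hlt
    · exact iff_of_true hle (Nat.count_monotone _ hle)
    · refine (count_le_count_iff (S := fun y => ActiveSite _ σ (siteBefore m y)) ?_).symm
      rw [siteBefore, if_neg (by omega)] at hSx
      rw [siteBefore_succ (by omega)]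
      exact hSx.p2314_of_le (by omega)

theorem hasLocalLimit_av2413 : HasLocalLimit (AvPred {p2413, p4213}) := by
  refine hasLocalLimit_of_iff_not_contains scheme2413 (orderInvariant_fourRel _)
    (fun _ => avPred_pair_iff (by decide)) (fun {k j} _ hj => ?_) fun {n σ m x} hm hx hSm hSx => ?_
  · simp only [scheme2413, schroderWalk, LabelWalk.Allowed]
    exact ⟨k - 1 - j, by omega⟩
  · have hlast : ActiveSite (fourRel p2413) σ (n + 1) := fun ⟨p, q, r, _, _, h⟩ => by
      rw [fourRel_p2413_iff] at h
      omega
    simp only [scheme2413]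
    rw [not_deactivates_p2413_iff hx, count_siteBefore_le_succ_iff hSm,
      count_siteBefore_eq_last_iff hSm hm hlast hx hSx]

theorem hasLocalLimit_av3412 : HasLocalLimit (AvPred {p3412, p4312}) := by
  refine hasLocalLimit_of_iff_not_contains scheme3412 (orderInvariant_fourRel _)
    (fun _ => avPred_pair_iff (by decide)) (fun {k j} _ hj => ?_) fun {n σ m x} hm _ hSm hSx => ?_
  · simp only [scheme3412, schroderWalk, LabelWalk.Allowed]
    exact ⟨k - 1 - j, by omega⟩
  · have hhigh (v : ℕ) (hv : n ≤ v) : ActiveSite (fourRel p3412) σ v :=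
      fun ⟨p, q, r, _, _, h⟩ => by
        rw [fourRel_p3412_iff] at h
        omega
    have hcount := count_siteBefore_last hSm hm (hhigh (n + 1) n.le_succ)
    rw [Nat.count_succ, if_pos (hhigh _ (by rw [siteBefore]; split_ifs <;> omega))] at hcount
    simp only [scheme3412]
    rw [not_deactivates_p3412_iff, count_siteBefore_le_iff hSm, ← hcount, Nat.succ_le_succ_iff]
    exact or_congr_right
      (count_le_count_iff (S := fun y => ActiveSite _ σ (siteBefore m y)) hSx).symm

end PatternFamilies

section DescentFamilies

/-- The number of occurrences of 2-31 in `σ` whose last two entries are those at `i` and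
`i + 1`. -/
def occAtDescent {n : ℕ} (σ : Perm (Fin n)) (i : ℕ) (hi : i + 1 < n) : ℕ :=
  (Finset.univ.filter fun j : Fin n =>
    (j : ℕ) < i ∧ σ ⟨i + 1, hi⟩ < σ j ∧ σ j < σ ⟨i, by omega⟩).card

/-- At every descent of `σ`, the number of occurrences of 2-31 satisfies `P`. -/
def DescentCond (P : ℕ → Prop) {n : ℕ} (σ : Perm (Fin n)) : Prop :=
  ∀ (i : ℕ) (hi : i + 1 < n), σ ⟨i + 1, hi⟩ < σ ⟨i, by omega⟩ → P (occAtDescent σ i hi)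

theorem descentCondA_iff {n : ℕ} {σ : Perm (Fin n)} :
    DescentCondA σ ↔ DescentCond (0 < ·) σ := by
  simp only [DescentCondA, DescentCond, occAtDescent, Finset.card_pos, Finset.filter_nonempty_iff,
    Finset.mem_univ, true_and]

section AppendLast

variable {n : ℕ} (σ : Perm (Fin (n + 1))) (m : Fin (n + 2))

theorem occAtDescent_appendLast {i : ℕ} (hi : i + 1 < n + 1) :
    occAtDescent (appendLast σ m) i (Nat.lt_succ_of_lt hi) = occAtDescent σ i hi := by
  refine Eq.trans (congrArg Finset.card ?_) (Finset.card_map Fin.castSuccEmb)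
  ext j
  induction j using Fin.lastCases with
  | last =>
    refine iff_of_false (fun h => ?_) (fun h => ?_)
    · have hlt : n + 1 < i := (Finset.mem_filter.1 h).2.1
      omega
    · obtain ⟨j, -, hj⟩ := Finset.mem_map.1 h
      exact Fin.castSucc_ne_last j hj
  | cast j =>
    rw [← Fin.coe_castSuccEmb, Finset.mem_map', Finset.mem_filter_univ, Finset.mem_filter_univ]
    exact and_congr_right' (and_congr
      (appendLast_castSucc_lt_iff σ m ⟨i + 1, hi⟩ j)
      (appendLast_castSucc_lt_iff σ m j ⟨i, by omega⟩))

theorem appendLast_last_lt_iff :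
    appendLast σ m (Fin.last (n + 1)) < appendLast σ m (Fin.last n).castSucc ↔
      (m : ℕ) ≤ σ (Fin.last n) := by
  rw [appendLast_last, Fin.lt_def, coe_appendLast_castSucc, shiftAbove]
  split_ifs <;> omega

theorem occAtDescent_appendLast_last (hm : (m : ℕ) ≤ σ (Fin.last n)) :
    occAtDescent (appendLast σ m) n (Nat.lt_succ_self _) = σ (Fin.last n) - m := by
  have hfilter : (Finset.univ.filter fun j : Fin (n + 2) => (j : ℕ) < n ∧
      appendLast σ m (Fin.last (n + 1)) < appendLast σ m j ∧
        appendLast σ m j < appendLast σ m (Fin.last n).castSucc) =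
      (Finset.Ioo m (appendLast σ m (Fin.last n).castSucc)).map
        (appendLast σ m).symm.toEmbedding := by
    ext j
    simp only [Finset.mem_filter, Finset.mem_univ, true_and, Finset.mem_map_equiv, symm_symm,
      Finset.mem_Ioo, appendLast_last]
    refine and_iff_right_of_imp fun ⟨hmj, hj⟩ => ?_
    induction j using Fin.lastCases with
    | last => exact absurd hmj (appendLast_last σ m).not_gt
    | cast j =>
      rw [appendLast_castSucc_lt_iff] at hj
      exact Fin.lt_last_iff_ne_last.2 fun h => hj.ne (congrArg σ h)
  refine (congrArg Finset.card hfilter).trans ?_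
  rw [Finset.card_map, Fin.card_Ioo, coe_appendLast_castSucc, shiftAbove, if_neg hm.not_gt]
  omega

theorem descentCond_appendLast_iff (P : ℕ → Prop) :
    DescentCond P (appendLast σ m) ↔ DescentCond P σ ∧
      ((m : ℕ) ≤ σ (Fin.last n) → P (σ (Fin.last n) - m)) := by
  constructor
  · refine fun h => ⟨fun i hi hlt => ?_, fun hm => ?_⟩
    · rw [← occAtDescent_appendLast σ m hi]
      exact h i _ ((appendLast_castSucc_lt_iff σ m ⟨i + 1, hi⟩ ⟨i, by omega⟩).2 hlt)
    · rw [← occAtDescent_appendLast_last σ m hm]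
      exact h n _ ((appendLast_last_lt_iff σ m).2 hm)
  · rintro ⟨hσ, hlast⟩ i hi hlt
    rcases (Nat.lt_succ_iff.1 (Nat.succ_lt_succ_iff.1 hi)).lt_or_eq with hin | rfl
    · have hi' : i + 1 < n + 1 := Nat.succ_lt_succ hin
      rw [occAtDescent_appendLast σ m hi']
      exact hσ i hi' ((appendLast_castSucc_lt_iff σ m ⟨i + 1, hi'⟩ ⟨i, by omega⟩).1 hlt)
    · have hm := (appendLast_last_lt_iff σ m).1 hlt
      rw [occAtDescent_appendLast_last σ m hm]
      exact hlast hm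

end AppendLast

variable {n : ℕ} {σ : Perm (Fin (n + 1))}

theorem activeSite_p213_iff (hσ : ¬ Contains (threeRel p213) σ) {m : ℕ} (hm : m ≤ n + 1) :
    ActiveSite (threeRel p213) σ m ↔ m ≤ σ (Fin.last n) + 1 := by
  constructor
  · refine fun hact => not_lt.1 fun hlt => hact ?_
    let p := σ.symm ⟨σ (Fin.last n) + 1, hlt.trans_le hm⟩
    have hp : (σ p : ℕ) = σ (Fin.last n) + 1 := by rw [σ.apply_symm_apply]
    have hp_lt : p < Fin.last n := Fin.lt_last_iff_ne_last.2 fun h => by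
      rw [h] at hp
      omega
    refine ⟨p, p, Fin.last n, hp_lt, hp_lt, ?_⟩
    rw [threeRel_p213_iff]
    omega
  · rintro hle ⟨p, q, r, hpr, hqr, h⟩
    rw [threeRel_p213_iff] at h
    rcases (Fin.le_last r).eq_or_lt with rfl | hr
    · omega
    · have hne : (σ p : ℕ) ≠ σ (Fin.last n) :=
        Fin.val_injective.ne (σ.injective.ne (hpr.trans hr).ne)
      refine hσ ⟨p, q, r, Fin.last n, hpr, hqr, hr, ?_⟩
      rw [threeRel_p213_iff]
      omega

theorem count_activeSite_p213 (hσ : ¬ Contains (threeRel p213) σ) {v : ℕ} (hv : v ≤ n + 2) :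
    Nat.count (ActiveSite (threeRel p213) σ) v = min v (σ (Fin.last n) + 2) := by
  induction v with
  | zero => simp
  | succ v ih =>
    rw [Nat.count_succ, ih (by omega), activeSite_p213_iff hσ (by omega)]
    split_ifs <;> omega

theorem hasLocalLimit_of_descentCond (s : GrowthScheme) {P : ℕ → Prop}
    {F : ∀ n, Perm (Fin n) → Prop}
    (hF : ∀ {n : ℕ} (σ : Perm (Fin n)), F n σ ↔ ¬ Contains (threeRel p213) σ ∧ DescentCond P σ)
    (hRemains : ∀ {k j i : ℕ}, s.Remains k j i ↔ i ≤ j + 1)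
    (exists_site_eq_iff : ∀ {l m : ℕ}, m ≤ l + 1 →
      ((∃ a, s.Allowed (l + 2) a ∧ s.site (l + 2) a = m) ↔ (m ≤ l → P (l - m)))) :
    HasLocalLimit F := by
  refine (GeneratingTree.ofRelation s (orderInvariant_threeRel p213) (fun σ => ?_) (fun h => ?_)
    (fun {n σ} m hσ _ => ?_) fun {n σ m x} _ hx hSm _ => ?_).hasLocalLimit
  · rw [hF]
    exact ⟨fun ⟨p, _, r, _, hpr, _⟩ => hpr.ne (Subsingleton.elim p r), fun i hi => by omega⟩
  · rw [hF, (orderInvariant_threeRel _).contains_appendLast_iff, not_or,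
      descentCond_appendLast_iff] at h
    exact (hF _).2 ⟨h.1.1, h.2.1⟩
  · obtain ⟨hav, hdesc⟩ := (hF σ).1 hσ
    have hlast := (σ (Fin.last n)).isLt
    rw [hF, (orderInvariant_threeRel _).contains_appendLast_iff, not_or, not_not,
      descentCond_appendLast_iff, and_iff_right hav, and_iff_right hdesc]
    refine and_congr_right fun hm => ?_
    have hle := (activeSite_p213_iff hav (Fin.is_le m)).1 hm
    rw [count_activeSite_p213 hav le_rfl, count_activeSite_p213 hav m.isLt.le,
      min_eq_right (by omega), min_eq_left (by omega), exists_site_eq_iff hle]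
  · rw [not_deactivates_p213_iff hx, hRemains, count_siteBefore_le_succ_iff hSm]

theorem hasLocalLimit_famA : HasLocalLimit FamAPred := by
  refine hasLocalLimit_of_descentCond schemeA (P := (0 < ·)) (fun _ => ?_) ?_ fun {l m} hm => ?_
  · rw [← descentCondA_iff, ← isOcc_iff_contains_threeRel, FamAPred]
  · simp only [schemeA, implies_true]
  · simp only [schemeA, motzkinWalk, LabelWalk.Allowed]
    constructor
    · rintro ⟨a, ha, rfl⟩ hle
      split_ifs at * <;> omega
    · intro hpos
      exact ⟨if m ≤ l then l - m else 0, by split_ifs at * <;> omega, by split_ifs at * <;> omega⟩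

theorem hasLocalLimit_famB : HasLocalLimit FamBPred := by
  refine hasLocalLimit_of_descentCond schemeB (P := Odd) (fun _ => ?_) ?_ fun {l m} hm => ?_
  · rw [← isOcc_iff_contains_threeRel]
    rfl
  · simp only [schemeB, implies_true]
  · simp only [schemeB, evenLossWalk, LabelWalk.Allowed]
    constructor
    · rintro ⟨a, ha, rfl⟩ hle
      exact ⟨a - 1, by omega⟩
    · intro hodd
      rcases le_or_gt m l with hle | hlt
      · obtain ⟨c, hc⟩ := hodd hle
        exact ⟨c + 1, by omega, by omega⟩
      · exact ⟨0, by omega, by omega⟩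

end DescentFamilies

/-- For `C` any one of the ten listed families and `σ_n` uniform on the permutations of size `n`
in `C`, there are constants `Λ_π ∈ [0,1]` such that `c-occ(π,σ_n)/n → Λ_π` in probability for
every pattern `π`. -/
theorem stmt13 (F : ∀ n, Equiv.Perm (Fin n) → Prop)
    (hF : F = AvPred {p123} ∨ F = AvPred {p132} ∨ F = AvPred {p1423, p4123} ∨
      F = AvPred {p1234, p2134} ∨ F = AvPred {p1324, p3124} ∨ F = AvPred {p2314, p3214} ∨
      F = AvPred {p2413, p4213} ∨ F = AvPred {p3412, p4312} ∨ F = FamAPred ∨ F = FamBPred) :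
    ∃ Λ : ∀ k : ℕ, Equiv.Perm (Fin k) → ℝ,
      (∀ (k : ℕ) (π : Equiv.Perm (Fin k)), 0 ≤ Λ k π ∧ Λ k π ≤ 1) ∧
      ∀ (k : ℕ) (π : Equiv.Perm (Fin k)) (ε : ℝ), 0 < ε →
        Filter.Tendsto
          (fun n : ℕ =>
            ((((Finset.univ.filter fun σ : Equiv.Perm (Fin n) => F n σ).filter
                fun σ => ε ≤ |(cOcc π σ : ℝ) / (n : ℝ) - Λ k π|).card : ℝ) /
              (((Finset.univ.filter fun σ : Equiv.Perm (Fin n) => F n σ).card : ℝ))))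
          Filter.atTop (nhds 0) := by
  rcases hF with rfl | rfl | rfl | rfl | rfl | rfl | rfl | rfl | rfl | rfl
  exacts [hasLocalLimit_av123, hasLocalLimit_av132, hasLocalLimit_av1423, hasLocalLimit_av1234,
    hasLocalLimit_av1324, hasLocalLimit_av2314, hasLocalLimit_av2413, hasLocalLimit_av3412,
    hasLocalLimit_famA, hasLocalLimit_famB]
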